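/- arXiv:2501.04852 — 3 statements merged into one kernel-verified Lean document; each statement's English description precedes it below -/
import Mathlib

section
/- For each integer a with 2^{s-1} ≤ a ≤ 2^s − 1, the number of tuples (h₀, h₁, …, h_{2^s−a−1}) ∈ F^{2^s−a} satisfying h_ℓ = Σ_{j=0}^{ℓ} h_j · C(a−j, ℓ−j) in F for every 0 ≤ ℓ ≤ 2^s − a − 1 equals (2^m)^{⌈(2^s−a+1)/2⌉}. Consequently, the number of self-dual ideals of 𝓡 of the form ⟨(x+1)^a + u² h(x), u(x+1)^{2^{s-1}}, u²(x+1)^{2^s−a}⟩, where 2^{s-1} ≤ a ≤ 2^s − 1 and h(x) = Σ_{j=0}^{2^s−a−1} h_j (x+1)^j ∈ 𝓚, equals Σ_{a=2^{s-1}}^{2^s−1} (2^m)^{⌈(2^s−a+1)/2⌉}. -/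
noncomputable section

open Polynomial

/-- The finite field `GF(2^m)`. -/
abbrev Fq (m : ℕ) : Type := GaloisField 2 m

/-- The ring `R₃ = F[u]/⟨u³⟩`. -/
abbrev R3 (m : ℕ) : Type := AdjoinRoot (X ^ 3 : (Fq m)[X])

/-- The polynomial `x^{2^s} + 1` over `R₃`. -/
abbrev gR (m s : ℕ) : (R3 m)[X] := X ^ (2 ^ s) + 1

/-- The polynomial `x^{2^s} + 1` over `F`. -/
abbrev gK (m s : ℕ) : (Fq m)[X] := X ^ (2 ^ s) + 1

/-- The ring `𝓡 = R₃[x]/⟨x^{2^s}+1⟩`. -/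
abbrev RR (m s : ℕ) : Type := AdjoinRoot (gR m s)

/-- The ring `𝓚 = F[x]/⟨x^{2^s}+1⟩`. -/
abbrev KK (m s : ℕ) : Type := AdjoinRoot (gK m s)

/-- The element `u` of `R₃`. -/
def uu (m : ℕ) : R3 m := AdjoinRoot.root _

/-- The element `u` of `𝓡`. -/
def uR (m s : ℕ) : RR m s := algebraMap (R3 m) (RR m s) (uu m)

/-- The element `x` of `𝓡`. -/
def xR (m s : ℕ) : RR m s := AdjoinRoot.root _

/-- The element `x` of `𝓚`. -/
def xK (m s : ℕ) : KK m s := AdjoinRoot.root _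

lemma gR_monic (m s : ℕ) : (gR m s).Monic := by
  have h : (gR m s) = X ^ (2 ^ s) + C 1 := by simp [gR]
  rw [h]; exact monic_X_pow_add_C _ (by positivity)

lemma gK_monic (m s : ℕ) : (gK m s).Monic := by
  have h : (gK m s) = X ^ (2 ^ s) + C 1 := by simp [gK]
  rw [h]; exact monic_X_pow_add_C _ (by positivity)

/-- The standard representative (of degree `< 2^s`) of an element of `𝓡`. -/
def repR (m s : ℕ) (c : RR m s) : (R3 m)[X] := AdjoinRoot.modByMonicHom (gR_monic m s) c

/-- The standard representative (of degree `< 2^s`) of an element of `𝓚`. -/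
def repK (m s : ℕ) (c : KK m s) : (Fq m)[X] := AdjoinRoot.modByMonicHom (gK_monic m s) c

/-- The `j`-th coefficient of the standard representative of `c ∈ 𝓡`. -/
def coeffR (m s : ℕ) (c : RR m s) (j : ℕ) : R3 m := (repR m s c).coeff j

/-- The dot product on `𝓡`. -/
def dotR (m s : ℕ) (c d : RR m s) : R3 m :=
  ∑ j ∈ Finset.range (2 ^ s), coeffR m s c j * coeffR m s d j

/-- The dual of a set of codewords. -/
def dualSet (m s : ℕ) (S : Set (RR m s)) : Set (RR m s) :=
  {c | ∀ d ∈ S, dotR m s c d = 0}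

/-- A cyclic code (ideal of `𝓡`) is self-dual if it coincides with its dual. -/
def IsSelfDual (m s : ℕ) (C : Ideal (RR m s)) : Prop :=
  (C : Set (RR m s)) = dualSet m s (C : Set (RR m s))

/-- The annihilator of a set of codewords. -/
def annSet (m s : ℕ) (S : Set (RR m s)) : Set (RR m s) :=
  {c | ∀ d ∈ S, c * d = 0}

/-- The reciprocal `c*(x) = x^{deg c} c(x⁻¹)` of an element of `𝓡`. -/
def recip (m s : ℕ) (c : RR m s) : RR m s :=
  xR m s ^ (repR m s c).natDegree *
    Polynomial.aeval (Ring.inverse (xR m s)) (repR m s c)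

/-- Reduction `R₃ → F` modulo `u`. -/
def epsR3 (m : ℕ) : R3 m →+* Fq m :=
  AdjoinRoot.lift (RingHom.id (Fq m)) 0 (by simp)

lemma xK_pow_add_one (m s : ℕ) : (xK m s) ^ (2 ^ s) + 1 = 0 := by
  have h := AdjoinRoot.eval₂_root (gK m s)
  simpa [gK, xK] using h

lemma xR_pow_add_one (m s : ℕ) : (xR m s) ^ (2 ^ s) + 1 = 0 := by
  have h := AdjoinRoot.eval₂_root (gR m s)
  simpa [gR, xR] using h

/-- Reduction `μ : 𝓡 → 𝓚` modulo `u`. -/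
def muRK (m s : ℕ) : RR m s →+* KK m s :=
  AdjoinRoot.lift ((algebraMap (Fq m) (KK m s)).comp (epsR3 m)) (xK m s) (by
    simp only [gR, eval₂_add, eval₂_pow, eval₂_X, eval₂_one]
    exact xK_pow_add_one m s)

/-- The natural inclusion `𝓚 → 𝓡`. -/
def KtoR (m s : ℕ) : KK m s →+* RR m s :=
  AdjoinRoot.lift ((algebraMap (R3 m) (RR m s)).comp (algebraMap (Fq m) (R3 m))) (xR m s) (by
    simp only [gK, eval₂_add, eval₂_pow, eval₂_X, eval₂_one]
    exact xR_pow_add_one m s)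

/-- The `i`-th torsion code of a set `S ⊆ 𝓡`. -/
def TorSet (m s : ℕ) (S : Set (RR m s)) (i : ℕ) : Set (KK m s) :=
  muRK m s '' {f | (uR m s) ^ i * f ∈ S}

/-- The torsion degree `T_i`: the (unique) `k` with `Tor_i = ⟨(x+1)^k⟩`. -/
def Tdeg (m s : ℕ) (S : Set (RR m s)) (i : ℕ) : ℕ :=
  sInf {k | TorSet m s S i =
    ((Ideal.span {(xK m s + 1) ^ k} : Ideal (KK m s)) : Set (KK m s))}

/-- Substitution `h(x) ↦ h(x⁻¹)` on `𝓚`. -/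
def invSub (m s : ℕ) (h : KK m s) : KK m s :=
  Polynomial.aeval (Ring.inverse (xK m s)) (repK m s h)



def solPred {F : Type*} [Field F] (N a : ℕ) (h : ℕ → F) : Prop :=
  (∀ j, N ≤ j → h j = 0) ∧
    ∀ ℓ < N, h ℓ = ∑ j ∈ Finset.range (ℓ + 1), h j * ((a - j).choose (ℓ - j) : F)

def freeIdx (N : ℕ) : Finset ℕ :=
  insert (N - 1) ((Finset.range (N / 2)).image (fun i => N % 2 + 2 * i))

lemma mem_freeIdx {N j : ℕ} (_hN : 1 ≤ N) :
    j ∈ freeIdx N ↔ j = N - 1 ∨ (j < N ∧ j % 2 = N % 2) := by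
  simp only [freeIdx, Finset.mem_insert, Finset.mem_image, Finset.mem_range]
  constructor
  · rintro (h | ⟨i, hi, rfl⟩)
    · exact Or.inl h
    · right; omega
  · rintro (h | ⟨h1, h2⟩)
    · exact Or.inl h
    · right; exact ⟨j / 2, by omega, by omega⟩

lemma card_freeIdx {N : ℕ} (hN : 1 ≤ N) : (freeIdx N).card = N / 2 + 1 := by
  rw [freeIdx, Finset.card_insert_of_notMem, Finset.card_image_of_injective, Finset.card_range]
  · intro i j h; simp only at h; omega
  · simp only [Finset.mem_image, Finset.mem_range, not_exists, not_and]
    intro i hi; omega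

lemma sol_det {F : Type*} [Field F] [CharP F 2] {N a : ℕ} (hN : 1 ≤ N) (ha : N ≤ a)
    (hpar : a % 2 = N % 2) {h g : ℕ → F} (hh : solPred N a h) (hg : solPred N a g)
    (hfree : ∀ j ∈ freeIdx N, h j = g j) : h = g := by
  funext j
  induction j using Nat.strong_induction_on with
  | _ j ih =>
    by_cases hj : N ≤ j
    · rw [hh.1 j hj, hg.1 j hj]
    by_cases hf : j ∈ freeIdx N
    · exact hfree j hf
    rw [mem_freeIdx hN] at hf
    push Not at hf hj
    have hj1 : j + 1 < N := by omega
    have hodd : ((a - j : ℕ) : F) = 1 := by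
      have : (a - j) % 2 = 1 := by have := hf.2 hj; omega
      rw [← Nat.div_add_mod (a - j) 2, this]
      push_cast
      rw [show (2 : F) = 0 from CharTwo.two_eq_zero]; simp
    have key : ∀ k : ℕ → F, solPred N a k →
        k j = - ∑ i ∈ Finset.range j, k i * ((a - i).choose (j + 1 - i) : F) := by
      intro k hk
      have e := hk.2 (j + 1) hj1
      rw [Finset.sum_range_succ, Finset.sum_range_succ] at e
      simp only [Nat.sub_self, Nat.choose_zero_right, Nat.cast_one, mul_one,
        show j + 1 - j = 1 by omega, Nat.choose_one_right, hodd] at e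
      linear_combination -e
    rw [key h hh, key g hg]
    congr 1
    refine Finset.sum_congr rfl fun i hi => ?_
    rw [ih i (Finset.mem_range.1 hi)]

lemma coeff_term {F : Type*} [Field F] (j b ℓ : ℕ) :
    ((X : F[X]) ^ j * (1 + X) ^ b).coeff ℓ = if j ≤ ℓ then (b.choose (ℓ - j) : F) else 0 := by
  rw [coeff_X_pow_mul']
  simp [coeff_one_add_X_pow]

lemma basis_fix {F : Type*} [Field F] [CharP F 2] (f k ℓ : ℕ) :
    ((X : F[X]) ^ f * (1 + X) ^ k).coeff ℓ =
      ∑ j ∈ Finset.range (ℓ + 1), ((X : F[X]) ^ f * (1 + X) ^ k).coeff j *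
        ((f + 2 * k - j).choose (ℓ - j) : F) := by
  have h2 : (2 : F[X]) = 0 := CharTwo.two_eq_zero
  have h1 : (X : F[X]) ^ f * (1 + X) ^ k =
      ∑ i ∈ Finset.range (k + 1), C (k.choose i : F) * (X ^ (f + i) * (1 + X) ^ (2 * k - i)) := by
    have : (1 : F[X]) = (X + (1 + X)) := by linear_combination (-X) * h2
    calc (X : F[X]) ^ f * (1 + X) ^ k = X ^ f * (1 + X) ^ k * (X + (1 + X)) ^ k := by
          rw [← this, one_pow, mul_one]
      _ = _ := by
          rw [add_pow X (1 + X), Finset.mul_sum]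
          refine Finset.sum_congr rfl fun i hi => ?_
          have : 2 * k - i = k + (k - i) := by have := Finset.mem_range.1 hi; omega
          rw [this, pow_add, pow_add]
          simp
          ring
  conv_lhs => rw [h1]
  rw [finsetSum_coeff]
  simp only [coeff_C_mul, coeff_term]
  -- both are sums over i with j = f + i
  have e1 : ∀ n : ℕ, k < n → (∑ i ∈ Finset.range (k + 1),
      (k.choose i : F) * (if f + i ≤ ℓ then ((2 * k - i).choose (ℓ - (f + i)) : F) else 0)) =
      ∑ i ∈ Finset.range n,
      (k.choose i : F) * (if f + i ≤ ℓ then ((2 * k - i).choose (ℓ - (f + i)) : F) else 0) := by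
    intro n hn
    refine Finset.sum_subset (by intro x; simp; omega) fun i _ hi => ?_
    rw [Nat.choose_eq_zero_of_lt (by simp at hi; omega)]; simp
  rw [e1 (k + ℓ + 1) (by omega)]
  have e2 : (∑ j ∈ Finset.range (ℓ + 1), (if f ≤ j then (k.choose (j - f) : F) else 0) *
      ((f + 2 * k - j).choose (ℓ - j) : F)) =
      ∑ j ∈ Finset.range (f + (k + ℓ + 1)), (if f ≤ j then (k.choose (j - f) : F) else 0) *
      (if j ≤ ℓ then ((f + 2 * k - j).choose (ℓ - j) : F) else 0) := by
    rw [← Finset.sum_subset (s₁ := Finset.range (ℓ + 1)) (s₂ := Finset.range (f + (k + ℓ + 1)))]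
    · refine Finset.sum_congr rfl fun i hi => ?_
      rw [if_pos (by simp at hi; omega : i ≤ ℓ)]
    · intro x; simp; omega
    · intro x _ hx
      rw [if_neg (by simp at hx; omega : ¬ x ≤ ℓ)]; simp
  rw [e2, Finset.sum_range_add _ f]
  rw [Finset.sum_eq_zero (s := Finset.range f), zero_add]
  · refine Finset.sum_congr rfl fun i _ => ?_
    rw [if_pos (by omega : f ≤ f + i), show f + i - f = i by omega,
      show f + 2 * k - (f + i) = 2 * k - i by omega]
  · intro i hi
    rw [if_neg (by simp at hi; omega)]; simp

/-- explicit solutions -/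
noncomputable def solBasis (F : Type*) [Field F] (N a f : ℕ) (j : ℕ) : F :=
  if N ≤ j then 0 else if f = N - 1 then (if j = N - 1 then 1 else 0) else
    ((X : F[X]) ^ f * (1 + X) ^ ((a - f) / 2)).coeff j

lemma solBasis_sol {F : Type*} [Field F] [CharP F 2] {N a : ℕ} (hN : 1 ≤ N) (ha : N ≤ a)
    (hpar : a % 2 = N % 2) {f : ℕ} (hf : f ∈ freeIdx N) : solPred N a (solBasis F N a f) := by
  constructor
  · intro j hj; simp [solBasis, hj]
  intro ℓ hℓ
  by_cases h : f = N - 1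
  · rw [Finset.sum_range_succ, Finset.sum_eq_zero]
    · simp
    · intro i hi
      have hi := Finset.mem_range.1 hi
      have : solBasis F N a f i = 0 := by
        rw [solBasis, if_neg (by omega), if_pos h, if_neg (by omega)]
      rw [this, zero_mul]
  · rw [mem_freeIdx hN] at hf
    have hf := hf.resolve_left h
    have e := basis_fix (F := F) f ((a - f) / 2) ℓ
    rw [show f + 2 * ((a - f) / 2) = a by omega] at e
    have e3 : ∀ j, j < N → solBasis F N a f j =
        ((X : F[X]) ^ f * (1 + X) ^ ((a - f) / 2)).coeff j := by
      intro j hj; rw [solBasis, if_neg (by omega), if_neg h]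
    rw [e3 ℓ hℓ, e]
    refine Finset.sum_congr rfl fun i hi => ?_
    rw [e3 i (by have := Finset.mem_range.1 hi; omega)]

lemma solBasis_self {F : Type*} [Field F] {N a : ℕ} (hN : 1 ≤ N)
    {f : ℕ} (hf : f ∈ freeIdx N) : solBasis F N a f f = 1 := by
  rw [mem_freeIdx hN] at hf
  rw [solBasis, if_neg (by omega)]
  split_ifs with h
  · rfl
  · rw [coeff_term]; simp

lemma solBasis_lt {F : Type*} [Field F] {N a : ℕ}
    {f j : ℕ} (hj : j < f) : solBasis F N a f j = 0 := by
  rw [solBasis]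
  split_ifs with h1 h2 h3
  · rfl
  · omega
  · rfl
  · rw [coeff_term, if_neg (by omega)]

lemma card_sol {F : Type*} [Field F] [Finite F] [CharP F 2] {N a : ℕ} (hN : 1 ≤ N) (ha : N ≤ a)
    (hpar : a % 2 = N % 2) :
    Finite {h : ℕ → F // solPred N a h} ∧
    Nat.card {h : ℕ → F // solPred N a h} = Nat.card F ^ (N / 2 + 1) := by
  have hc : Nat.card (freeIdx N → F) = Nat.card F ^ (N / 2 + 1) := by
    rw [Nat.card_fun]; simp [card_freeIdx hN]
  let φ : {h : ℕ → F // solPred N a h} → (freeIdx N → F) := fun h j => h.1 j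
  have hφ : Function.Injective φ := by
    intro h g e
    apply Subtype.ext
    exact sol_det hN ha hpar h.2 g.2 fun j hj => congrFun e ⟨j, hj⟩
  have hfin : Finite {h : ℕ → F // solPred N a h} := Finite.of_injective φ hφ
  refine ⟨hfin, le_antisymm ?_ ?_⟩
  · rw [← hc]; exact Nat.card_le_card_of_injective φ hφ
  · let ψ : (freeIdx N → F) → {h : ℕ → F // solPred N a h} := fun c =>
      ⟨fun j => ∑ f : freeIdx N, c f * solBasis F N a f j, by
        constructor
        · intro j hj
          exact Finset.sum_eq_zero fun f _ => by
            rw [(solBasis_sol hN ha hpar f.2).1 j hj, mul_zero]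
        · intro ℓ hℓ
          simp only [Finset.sum_mul]
          rw [Finset.sum_comm]
          refine Finset.sum_congr rfl fun f _ => ?_
          rw [(solBasis_sol hN ha hpar f.2).2 ℓ hℓ, Finset.mul_sum]
          exact Finset.sum_congr rfl fun i _ => by ring⟩
    rw [← hc]
    refine Nat.card_le_card_of_injective ψ ?_
    intro c d e
    have e' : ∀ j, ∑ f : freeIdx N, c f * solBasis F N a f j =
      ∑ f : freeIdx N, d f * solBasis F N a f j := fun j => congrFun (congrArg Subtype.val e) j
    funext ⟨j, hj⟩
    induction j using Nat.strong_induction_on with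
    | _ j ih =>
      have := e' j
      rw [← Finset.add_sum_erase _ _ (Finset.mem_univ ⟨j, hj⟩),
        ← Finset.add_sum_erase _ _ (Finset.mem_univ ⟨j, hj⟩)] at this
      rw [solBasis_self hN hj, mul_one, mul_one] at this
      have h2 : ∑ f ∈ Finset.univ.erase (⟨j, hj⟩ : freeIdx N), c f * solBasis F N a f j =
          ∑ f ∈ Finset.univ.erase (⟨j, hj⟩ : freeIdx N), d f * solBasis F N a f j := by
        refine Finset.sum_congr rfl fun f hf => ?_
        obtain ⟨i, hi⟩ := f
        have hne : i ≠ j := by simpa using hf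
        rcases lt_or_gt_of_ne hne with h | h
        · rw [ih i h hi]
        · simp only; rw [solBasis_lt h]; simp
      rw [h2] at this
      exact add_right_cancel this

lemma ceil_half {s a : ℕ} (ha : a ≤ 2 ^ s) :
    ⌈((2 ^ s : ℚ) - (a : ℚ) + 1) / 2⌉₊ = (2 ^ s - a) / 2 + 1 := by
  obtain ⟨N, hN⟩ : ∃ N, 2 ^ s - a = N := ⟨_, rfl⟩
  have h : (2 ^ s : ℚ) - a = N := by
    rw [← hN, Nat.cast_sub ha]; push_cast; rfl
  rw [h, hN]
  rw [Nat.ceil_eq_iff (by omega)]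
  have h1 : (N : ℚ) = 2 * (N / 2 : ℕ) + (N % 2 : ℕ) := by exact_mod_cast (Nat.div_add_mod N 2).symm
  have h2 : N % 2 = 0 ∨ N % 2 = 1 := by omega
  constructor
  · simp only [Nat.add_sub_cancel]
    rcases h2 with h2 | h2 <;> rw [h2] at h1 <;> push_cast at h1 ⊢ <;> linarith
  · rcases h2 with h2 | h2 <;> rw [h2] at h1 <;> push_cast at h1 ⊢ <;> linarith

/-! ### The ring `𝓚` -/

lemma two_KK (m s : ℕ) : (2 : KK m s) = 0 := by
  have : (2 : Fq m) = 0 := CharTwo.two_eq_zero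
  rw [← map_ofNat (algebraMap (Fq m) (KK m s)) 2, this, map_zero]

lemma two_RR (m s : ℕ) : (2 : RR m s) = 0 := by
  rw [← map_ofNat (KtoR m s) 2, two_KK, map_zero]

lemma xK_pow (m s : ℕ) : (xK m s) ^ (2 ^ s) = 1 := by
  linear_combination xK_pow_add_one m s - two_KK m s

lemma xR_pow (m s : ℕ) : (xR m s) ^ (2 ^ s) = 1 := by
  linear_combination xR_pow_add_one m s - two_RR m s

/-- evaluation at `y = x + 1` -/
def piK (m s : ℕ) : (Fq m)[X] →ₐ[Fq m] KK m s := aeval (xK m s + 1)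

lemma piK_X (m s : ℕ) : piK m s X = xK m s + 1 := by simp [piK]

lemma piK_eq (m s : ℕ) (p : (Fq m)[X]) :
    piK m s p = AdjoinRoot.mk (gK m s) (p.comp (X + 1)) := by
  rw [← AdjoinRoot.aeval_eq, aeval_comp]
  simp [piK, xK]

lemma comp_comp_self (m : ℕ) (p : (Fq m)[X]) : (p.comp (X + 1)).comp (X + 1) = p := by
  have h2 : (2 : (Fq m)[X]) = 0 := CharTwo.two_eq_zero
  rw [comp_assoc]
  have : ((X + 1 : (Fq m)[X]).comp (X + 1)) = X := by
    simp; linear_combination h2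
  rw [this, comp_X]

lemma gK_eq (m s : ℕ) : gK m s = (X + 1) ^ (2 ^ s) := by
  rw [add_pow_char_pow]; simp [gK]

lemma piK_eq_zero (m s : ℕ) (p : (Fq m)[X]) : piK m s p = 0 ↔ X ^ (2 ^ s) ∣ p := by
  rw [piK_eq, AdjoinRoot.mk_eq_zero, gK_eq]
  constructor
  · rintro ⟨q, hq⟩
    refine ⟨q.comp (X + 1), ?_⟩
    rw [← comp_comp_self m p, hq, mul_comp]
    congr 1
    rw [show ((X + 1 : (Fq m)[X]) ^ 2 ^ s) = (X ^ 2 ^ s).comp (X + 1) by simp, comp_comp_self]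
  · rintro ⟨q, rfl⟩
    exact ⟨q.comp (X + 1), by simp⟩

lemma piK_surj (m s : ℕ) (z : KK m s) : ∃ p, piK m s p = z := by
  obtain ⟨q, rfl⟩ := AdjoinRoot.mk_surjective z
  exact ⟨q.comp (X + 1), by rw [piK_eq, comp_comp_self]⟩

lemma y_pow_n (m s : ℕ) : (xK m s + 1) ^ (2 ^ s) = 0 := by
  rw [← piK_X, ← map_pow, piK_eq_zero]

lemma y_pow_ge {m s i : ℕ} (h : 2 ^ s ≤ i) : (xK m s + 1) ^ i = 0 := by
  rw [← Nat.sub_add_cancel h, pow_add, y_pow_n, mul_zero]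

lemma y_pow_eq_zero {m s i : ℕ} (h : (xK m s + 1) ^ i = 0) : 2 ^ s ≤ i := by
  rw [← piK_X, ← map_pow, piK_eq_zero] at h
  exact (pow_dvd_pow_iff X_ne_zero not_isUnit_X).1 h

lemma y_ann {m s i : ℕ} (hi : i ≤ 2 ^ s) {z : KK m s} (h : (xK m s + 1) ^ i * z = 0) :
    ∃ w, z = (xK m s + 1) ^ (2 ^ s - i) * w := by
  obtain ⟨p, rfl⟩ := piK_surj m s z
  rw [← piK_X, ← map_pow, ← map_mul, piK_eq_zero] at h
  have h' : (X : (Fq m)[X]) ^ i * X ^ (2 ^ s - i) ∣ X ^ i * p := by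
    rw [← pow_add, Nat.add_sub_cancel' hi]; exact h
  obtain ⟨q, hq⟩ := (mul_dvd_mul_iff_left (pow_ne_zero i X_ne_zero)).1 h'
  exact ⟨piK m s q, by rw [← piK_X, ← map_pow, ← map_mul, hq]⟩

lemma y_dvd {m s N : ℕ} (hN : N ≤ 2 ^ s) {p : (Fq m)[X]} :
    (∃ w, piK m s p = (xK m s + 1) ^ N * w) ↔ X ^ N ∣ p := by
  constructor
  · rintro ⟨w, hw⟩
    obtain ⟨q, rfl⟩ := piK_surj m s w
    rw [← piK_X, ← map_pow, ← map_mul, ← sub_eq_zero, ← map_sub, piK_eq_zero] at hw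
    have := (pow_dvd_pow X hN).trans hw
    exact (dvd_iff_dvd_of_dvd_sub this).2 (dvd_mul_right _ _)
  · rintro ⟨q, rfl⟩
    exact ⟨piK m s q, by rw [map_mul, map_pow, piK_X]⟩

/-! ### The ring `𝓡` -/

lemma uR_cube (m s : ℕ) : uR m s ^ 3 = 0 := by
  rw [uR, ← map_pow]
  have : uu m ^ 3 = 0 := by
    have h := AdjoinRoot.eval₂_root (X ^ 3 : (Fq m)[X])
    simpa [uu] using h
  rw [this, map_zero]

lemma KtoR_x (m s : ℕ) : KtoR m s (xK m s) = xR m s := by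
  simp [KtoR, xK]

lemma KtoR_alg (m s : ℕ) (t : Fq m) : KtoR m s (algebraMap (Fq m) (KK m s) t) =
    algebraMap (R3 m) (RR m s) (algebraMap (Fq m) (R3 m) t) :=
  AdjoinRoot.lift_of _

def thetaR3 (m s : ℕ) : R3 m →+* AdjoinRoot (X ^ 3 : (KK m s)[X]) :=
  AdjoinRoot.lift ((AdjoinRoot.of _).comp (algebraMap (Fq m) (KK m s))) (AdjoinRoot.root _) (by
    have h := AdjoinRoot.eval₂_root (X ^ 3 : (KK m s)[X])
    simpa using h)

def theta (m s : ℕ) : RR m s →+* AdjoinRoot (X ^ 3 : (KK m s)[X]) :=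
  AdjoinRoot.lift (thetaR3 m s) (AdjoinRoot.of _ (xK m s)) (by
    simp only [gR, eval₂_add, eval₂_pow, eval₂_X, eval₂_one]
    rw [← map_pow, ← map_one (AdjoinRoot.of (X ^ 3 : (KK m s)[X])), ← map_add, xK_pow_add_one,
      map_zero])

lemma theta_u (m s : ℕ) : theta m s (uR m s) = AdjoinRoot.root _ := by
  rw [theta, uR, AdjoinRoot.algebraMap_eq, AdjoinRoot.lift_of, thetaR3, uu, AdjoinRoot.lift_root]

lemma theta_K (m s : ℕ) (z : KK m s) : theta m s (KtoR m s z) = AdjoinRoot.of _ z := by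
  have : (theta m s).comp (KtoR m s) = AdjoinRoot.of _ := by
    refine AdjoinRoot.ringHom_ext ?_ ?_
    · ext t
      have e : (algebraMap (Fq m) (KK m s)) = AdjoinRoot.of (gK m s) := rfl
      simp only [RingHom.comp_apply]
      rw [← e, KtoR_alg, theta, AdjoinRoot.algebraMap_eq, AdjoinRoot.lift_of]
      exact AdjoinRoot.lift_of _
    · have e : AdjoinRoot.root (gK m s) = xK m s := rfl
      simp only [RingHom.comp_apply]
      rw [e, KtoR_x, theta, xR, AdjoinRoot.lift_root]
  exact RingHom.congr_fun this z

/-- `c₀ + u c₁ + u² c₂` -/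
def DD (m s : ℕ) (a b c : KK m s) : RR m s :=
  KtoR m s a + uR m s * KtoR m s b + uR m s ^ 2 * KtoR m s c

lemma DD_eq_zero {m s : ℕ} {a b c : KK m s} (h : DD m s a b c = 0) : a = 0 ∧ b = 0 ∧ c = 0 := by
  have h1 := congrArg (theta m s) h
  simp only [DD, map_add, map_mul, map_pow, theta_u, theta_K, map_zero] at h1
  have h2 : AdjoinRoot.mk (X ^ 3 : (KK m s)[X]) (C a + X * C b + X ^ 2 * C c) = 0 := by
    rw [← h1]; simp only [map_add, map_mul, map_pow, AdjoinRoot.mk_C, AdjoinRoot.mk_X]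
  rw [AdjoinRoot.mk_eq_zero, X_pow_dvd_iff] at h2
  refine ⟨?_, ?_, ?_⟩
  · simpa [coeff_X_pow_mul', coeff_C] using h2 0 (by norm_num)
  · simpa [coeff_X_pow_mul', coeff_X_mul, coeff_C] using h2 1 (by norm_num)
  · simpa [coeff_X_pow_mul', coeff_X_mul, coeff_C] using h2 2 (by norm_num)

lemma DD_inj {m s : ℕ} {a b c a' b' c' : KK m s} (h : DD m s a b c = DD m s a' b' c') :
    a = a' ∧ b = b' ∧ c = c' := by
  have : DD m s (a - a') (b - b') (c - c') = 0 := by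
    rw [← sub_eq_zero] at h
    rw [← h]; simp only [DD, map_sub]; ring
  obtain ⟨h1, h2, h3⟩ := DD_eq_zero this
  exact ⟨sub_eq_zero.1 h1, sub_eq_zero.1 h2, sub_eq_zero.1 h3⟩

lemma DD_mul (m s : ℕ) (a b c a' b' c' : KK m s) :
    DD m s a b c * DD m s a' b' c' =
      DD m s (a * a') (a * b' + b * a') (a * c' + b * b' + c * a') := by
  simp only [DD, map_add, map_mul]
  linear_combination (KtoR m s b * KtoR m s c' + KtoR m s c * KtoR m s b' +
    uR m s * KtoR m s c * KtoR m s c') * uR_cube m s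

lemma DD_add (m s : ℕ) (a b c a' b' c' : KK m s) :
    DD m s a b c + DD m s a' b' c' = DD m s (a + a') (b + b') (c + c') := by
  simp only [DD, map_add]; ring

lemma DD_surj (m s : ℕ) (z : RR m s) : ∃ a b c, DD m s a b c = z := by
  let S : Subring (RR m s) :=
    { carrier := {z | ∃ a b c, DD m s a b c = z}
      mul_mem' := by
        rintro _ _ ⟨a, b, c, rfl⟩ ⟨a', b', c', rfl⟩
        exact ⟨_, _, _, (DD_mul m s _ _ _ _ _ _).symm⟩
      add_mem' := by
        rintro _ _ ⟨a, b, c, rfl⟩ ⟨a', b', c', rfl⟩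
        exact ⟨_, _, _, (DD_add m s _ _ _ _ _ _).symm⟩
      one_mem' := ⟨1, 0, 0, by simp [DD]⟩
      zero_mem' := ⟨0, 0, 0, by simp [DD]⟩
      neg_mem' := by
        rintro _ ⟨a, b, c, rfl⟩
        exact ⟨-a, -b, -c, by simp only [DD, map_neg]; ring⟩ }
  have hK : ∀ z, KtoR m s z ∈ S := fun z => ⟨z, 0, 0, by simp [DD]⟩
  have hu : uR m s ∈ S := ⟨0, 1, 0, by simp [DD]⟩
  have hx : xR m s ∈ S := by rw [← KtoR_x]; exact hK _
  have hr : ∀ r : R3 m, algebraMap (R3 m) (RR m s) r ∈ S := by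
    intro r
    obtain ⟨q, rfl⟩ := AdjoinRoot.mk_surjective r
    induction q using Polynomial.induction_on' with
    | add p q hp hq => rw [map_add, map_add]; exact S.add_mem hp hq
    | monomial n t =>
      rw [← C_mul_X_pow_eq_monomial, map_mul, map_mul, map_pow, map_pow]
      refine S.mul_mem ?_ (S.pow_mem hu n)
      have := hK (algebraMap (Fq m) (KK m s) t)
      rw [KtoR_alg] at this
      exact this
  obtain ⟨q, rfl⟩ := AdjoinRoot.mk_surjective z
  change AdjoinRoot.mk (gR m s) q ∈ S
  induction q using Polynomial.induction_on' with
  | add p q hp hq => rw [map_add]; exact S.add_mem hp hq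
  | monomial n t =>
    rw [← C_mul_X_pow_eq_monomial, map_mul, map_pow]
    exact S.mul_mem (hr t) (S.pow_mem hx n)

/-! ### The dual -/

def sigmaR (m s : ℕ) : RR m s →+* RR m s :=
  AdjoinRoot.lift (algebraMap (R3 m) (RR m s)) (xR m s ^ (2 ^ s - 1)) (by
    simp only [gR, eval₂_add, eval₂_pow, eval₂_X, eval₂_one]
    rw [← pow_mul, mul_comm, pow_mul, xR_pow, one_pow]
    linear_combination two_RR m s)

lemma sigmaR_x (m s : ℕ) : sigmaR m s (xR m s) = xR m s ^ (2 ^ s - 1) :=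
  AdjoinRoot.lift_root _

lemma sigmaR_alg (m s : ℕ) (r : R3 m) :
    sigmaR m s (algebraMap (R3 m) (RR m s) r) = algebraMap (R3 m) (RR m s) r :=
  AdjoinRoot.lift_of _

lemma sigmaR_u (m s : ℕ) : sigmaR m s (uR m s) = uR m s := sigmaR_alg m s _

lemma xR_inv (m s : ℕ) : xR m s * xR m s ^ (2 ^ s - 1) = 1 := by
  rw [← pow_succ', Nat.sub_add_cancel Nat.one_le_two_pow, xR_pow]

lemma sigmaR_y (m s : ℕ) :
    sigmaR m s (xR m s + 1) = xR m s ^ (2 ^ s - 1) * (xR m s + 1) := by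
  rw [map_add, map_one, sigmaR_x]
  linear_combination - xR_inv m s

instance nontrivial_R3 (m : ℕ) : Nontrivial (R3 m) :=
  AdjoinRoot.nontrivial _ (by simp)

lemma natDegree_gR (m s : ℕ) : (gR m s).degree = ((2 ^ s : ℕ) : WithBot ℕ) := by
  have h : (gR m s) = X ^ (2 ^ s) + C 1 := by simp [gR]
  rw [h, degree_X_pow_add_C (by positivity)]

lemma repR_mk (m s : ℕ) (p : (R3 m)[X]) (hp : p.degree < (2 ^ s : ℕ)) :
    repR m s (AdjoinRoot.mk _ p) = p := by
  rw [repR, AdjoinRoot.modByMonicHom_mk, (modByMonic_eq_self_iff (gR_monic m s)).2]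
  rwa [natDegree_gR]

def tauR (m s : ℕ) : RR m s →ₗ[R3 m] R3 m :=
  (lcoeff (R3 m) 0).comp (AdjoinRoot.modByMonicHom (gR_monic m s))

lemma coeffR_x_pow {m s k : ℕ} (hk : k < 2 ^ s) (j : ℕ) :
    coeffR m s (xR m s ^ k) j = if j = k then 1 else 0 := by
  have : xR m s ^ k = AdjoinRoot.mk (gR m s) (X ^ k) := by rw [map_pow]; rfl
  rw [coeffR, this, repR_mk, coeff_X_pow]
  rw [degree_X_pow]; exact_mod_cast hk

lemma tauR_x_pow (m s k : ℕ) :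
    tauR m s (xR m s ^ k) = if 2 ^ s ∣ k then 1 else 0 := by
  have h : xR m s ^ k = xR m s ^ (k % 2 ^ s) := by
    conv_lhs => rw [← Nat.div_add_mod k (2 ^ s), pow_add, pow_mul, xR_pow, one_pow, one_mul]
  have h2 := coeffR_x_pow (m := m) (Nat.mod_lt k (Nat.two_pow_pos s)) 0
  rw [h]
  refine h2.trans ?_
  simp only [Nat.dvd_iff_mod_eq_zero, eq_comm]

lemma decomp_R (m s : ℕ) (c : RR m s) :
    c = ∑ j ∈ Finset.range (2 ^ s), coeffR m s c j • xR m s ^ j := by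
  have h1 : AdjoinRoot.mk (gR m s) (repR m s c) = c := AdjoinRoot.mk_leftInverse (gR_monic m s) c
  have h2 : (repR m s c).degree < (2 ^ s : ℕ) := by
    obtain ⟨p, rfl⟩ := AdjoinRoot.mk_surjective c
    rw [repR, AdjoinRoot.modByMonicHom_mk, ← natDegree_gR m s]
    exact degree_modByMonic_lt _ (gR_monic m s)
  conv_lhs => rw [← h1]
  rw [as_sum_range' (repR m s c) (2 ^ s) ?_, map_sum]
  · refine Finset.sum_congr rfl fun j _ => ?_
    rw [← C_mul_X_pow_eq_monomial, map_mul, map_pow, Algebra.smul_def]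
    rfl
  · by_cases h0 : repR m s c = 0
    · rw [h0]; simp
    · exact (natDegree_lt_iff_degree_lt h0).2 h2

lemma dotR_eq (m s : ℕ) (c d : RR m s) : dotR m s c d = tauR m s (c * sigmaR m s d) := by
  conv_rhs => rw [decomp_R m s c, decomp_R m s d]
  simp only [map_sum, Finset.sum_mul, Finset.mul_sum]
  rw [dotR, Finset.sum_comm]
  refine Finset.sum_congr rfl fun i hi => ?_
  have hi := Finset.mem_range.1 hi
  have key : ∀ j, tauR m s (coeffR m s c i • xR m s ^ i *
      sigmaR m s (coeffR m s d j • xR m s ^ j)) =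
      coeffR m s c i * coeffR m s d j * (if 2 ^ s ∣ i + (2 ^ s - 1) * j then 1 else 0) := by
    intro j
    rw [← tauR_x_pow m s, ← smul_eq_mul (coeffR m s c i * coeffR m s d j), ← (tauR m s).map_smul]
    congr 1
    simp only [Algebra.smul_def, map_mul, sigmaR_alg, map_pow, sigmaR_x]
    rw [pow_add, pow_mul]; ring
  have arith : ∀ j, j < 2 ^ s → (2 ^ s ∣ i + (2 ^ s - 1) * j ↔ i = j) := by
    intro j hj
    obtain ⟨n, hn⟩ : ∃ n, 2 ^ s = n + 1 := ⟨2 ^ s - 1, by omega⟩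
    rw [hn] at hi hj ⊢
    rw [Nat.add_sub_cancel]
    constructor
    · intro h
      have h1 : ((n + 1 : ℕ) : ℤ) ∣ (i : ℤ) - j := by
        have h3 : ((n + 1 : ℕ) : ℤ) ∣ (i : ℤ) + n * j := by exact_mod_cast h
        have : (i : ℤ) - j = (i + n * j) - ((n + 1 : ℕ) : ℤ) * j := by push_cast; ring
        rw [this]; exact dvd_sub h3 (dvd_mul_right _ _)
      have h2 := Int.eq_zero_of_abs_lt_dvd h1 (by rw [abs_lt]; push_cast; omega)
      omega
    · rintro rfl
      exact ⟨i, by ring⟩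
  rw [Finset.sum_eq_single i]
  · rw [key, if_pos ((arith i hi).2 rfl), mul_one]
  · intro j hj hne
    rw [key, if_neg, mul_zero]
    rw [arith j (Finset.mem_range.1 hj)]; exact fun h => hne h.symm
  · intro h; exact absurd (Finset.mem_range.2 hi) h

lemma eq_zero_of_dot {m s : ℕ} {z : RR m s} (h : ∀ e, dotR m s z e = 0) : z = 0 := by
  rw [decomp_R m s z]
  refine Finset.sum_eq_zero fun j hj => ?_
  have := h (xR m s ^ j)
  rw [dotR, Finset.sum_eq_single j] at this
  · rw [coeffR_x_pow (Finset.mem_range.1 hj), if_pos rfl, mul_one] at this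
    rw [this, zero_smul]
  · intro i _ hne
    rw [coeffR_x_pow (Finset.mem_range.1 hj), if_neg hne, mul_zero]
  · intro h; exact absurd hj h

lemma mem_dual {m s : ℕ} (I : Ideal (RR m s)) (c : RR m s) :
    c ∈ dualSet m s (I : Set (RR m s)) ↔ ∀ d ∈ I, c * sigmaR m s d = 0 := by
  constructor
  · intro h d hd
    refine eq_zero_of_dot fun e => ?_
    rw [dotR_eq, mul_assoc, ← map_mul, ← dotR_eq]
    exact h _ (I.mul_mem_right e hd)
  · intro h d hd
    rw [dotR_eq, h d hd, map_zero]

lemma mem_dual_span {m s : ℕ} (S : Set (RR m s)) (c : RR m s) :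
    c ∈ dualSet m s (Ideal.span S : Set (RR m s)) ↔ ∀ d ∈ S, c * sigmaR m s d = 0 := by
  rw [mem_dual]
  constructor
  · intro h d hd; exact h d (Ideal.subset_span hd)
  · intro h d hd
    induction hd using Submodule.span_induction with
    | mem x hx => exact h x hx
    | zero => simp
    | add x y _ _ hx hy => rw [map_add, mul_add, hx, hy, add_zero]
    | smul r x _ hx => rw [smul_eq_mul, map_mul, mul_left_comm, hx, mul_zero]

/-! ### The ideals -/

def genId (m s a : ℕ) (H : KK m s) : Ideal (RR m s) :=
  Ideal.span {(xR m s + 1) ^ a + uR m s ^ 2 * KtoR m s H,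
    uR m s * (xR m s + 1) ^ (2 ^ (s - 1)),
    uR m s ^ 2 * (xR m s + 1) ^ (2 ^ s - a)}

def Pm (m s a : ℕ) (H c0 c1 c2 : KK m s) : Prop :=
  ∃ e f g, c0 = (xK m s + 1) ^ a * e ∧ c1 = (xK m s + 1) ^ (2 ^ (s - 1)) * f ∧
    c2 = H * e + (xK m s + 1) ^ (2 ^ s - a) * g

lemma KtoR_y (m s k : ℕ) : KtoR m s ((xK m s + 1) ^ k) = (xR m s + 1) ^ k := by
  rw [map_pow, map_add, map_one, KtoR_x]

lemma g1_eq (m s a : ℕ) (H : KK m s) :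
    (xR m s + 1) ^ a + uR m s ^ 2 * KtoR m s H = DD m s ((xK m s + 1) ^ a) 0 H := by
  simp [DD, KtoR_x]

lemma g2_eq (m s k : ℕ) :
    uR m s * (xR m s + 1) ^ k = DD m s 0 ((xK m s + 1) ^ k) 0 := by
  simp [DD, KtoR_x]

lemma g3_eq (m s k : ℕ) :
    uR m s ^ 2 * (xR m s + 1) ^ k = DD m s 0 0 ((xK m s + 1) ^ k) := by
  simp [DD, KtoR_x]

lemma two_half {s : ℕ} (hs : 0 < s) : 2 ^ s = 2 * 2 ^ (s - 1) := by
  rw [← pow_succ']; congr 1; omega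

lemma mem_genId {m s a : ℕ} (hs : 0 < s) (ha : 2 ^ (s - 1) ≤ a) (H c0 c1 c2 : KK m s) :
    DD m s c0 c1 c2 ∈ genId m s a H ↔ Pm m s a H c0 c1 c2 := by
  have h2 := two_half hs
  rw [genId, g1_eq, g2_eq, g3_eq]
  constructor
  · intro h
    rw [Ideal.mem_span_insert] at h
    obtain ⟨r, z, hz, h⟩ := h
    rw [Ideal.mem_span_pair] at hz
    obtain ⟨t, w, rfl⟩ := hz
    obtain ⟨r0, r1, r2, rfl⟩ := DD_surj m s r
    obtain ⟨t0, t1, t2, rfl⟩ := DD_surj m s t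
    obtain ⟨w0, w1, w2, rfl⟩ := DD_surj m s w
    simp only [DD_mul, DD_add] at h
    obtain ⟨e0, e1, e2⟩ := DD_inj h
    have k1 : (xK m s + 1) ^ a = (xK m s + 1) ^ (2 ^ (s - 1)) *
        (xK m s + 1) ^ (a - 2 ^ (s - 1)) := by
      rw [← pow_add]; congr 1; omega
    have k2 : (xK m s + 1) ^ a = (xK m s + 1) ^ (2 ^ s - a) *
        (xK m s + 1) ^ (a - (2 ^ s - a)) := by
      rw [← pow_add]; congr 1; omega
    have k3 : (xK m s + 1) ^ (2 ^ (s - 1)) = (xK m s + 1) ^ (2 ^ s - a) *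
        (xK m s + 1) ^ (2 ^ (s - 1) - (2 ^ s - a)) := by
      rw [← pow_add]; congr 1; omega
    refine ⟨r0, r1 * (xK m s + 1) ^ (a - 2 ^ (s - 1)) + t0,
      r2 * (xK m s + 1) ^ (a - (2 ^ s - a)) +
      t1 * (xK m s + 1) ^ (2 ^ (s - 1) - (2 ^ s - a)) + w0, ?_, ?_, ?_⟩
    · rw [e0]; ring
    · rw [e1]; linear_combination r1 * k1
    · rw [e2]; linear_combination r2 * k2 + t1 * k3
  · rintro ⟨e, f, g, rfl, rfl, rfl⟩
    have : DD m s ((xK m s + 1) ^ a * e) ((xK m s + 1) ^ 2 ^ (s - 1) * f)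
        (H * e + (xK m s + 1) ^ (2 ^ s - a) * g) =
        KtoR m s e * DD m s ((xK m s + 1) ^ a) 0 H +
        KtoR m s f * DD m s 0 ((xK m s + 1) ^ 2 ^ (s - 1)) 0 +
        KtoR m s g * DD m s 0 0 ((xK m s + 1) ^ (2 ^ s - a)) := by
      simp only [DD, map_add, map_mul, map_zero]; ring
    rw [this]
    refine Ideal.add_mem _ (Ideal.add_mem _ ?_ ?_) ?_ <;>
      exact Ideal.mul_mem_left _ _ (Ideal.subset_span (by simp))

lemma xR_cancel {m s : ℕ} (k : ℕ) {z : RR m s} : xR m s ^ k * z = 0 ↔ z = 0 := by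
  constructor
  · intro h
    have h1 : (xR m s ^ (2 ^ s - 1)) ^ k * xR m s ^ k = 1 := by
      rw [← mul_pow, mul_comm, xR_inv, one_pow]
    calc z = (xR m s ^ (2 ^ s - 1)) ^ k * xR m s ^ k * z := by rw [h1, one_mul]
      _ = 0 := by rw [mul_assoc, h, mul_zero]
  · rintro rfl; simp

lemma mem_dual_genId {m s a : ℕ} (hs : 0 < s) (ha : 2 ^ (s - 1) ≤ a) (ha' : a ≤ 2 ^ s)
    (H H' : KK m s)
    (hH : xR m s ^ a * sigmaR m s (KtoR m s H) = KtoR m s H') (c0 c1 c2 : KK m s) :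
    DD m s c0 c1 c2 ∈ dualSet m s (genId m s a H : Set (RR m s)) ↔ Pm m s a H' c0 c1 c2 := by
  have h2 := two_half hs
  have hx : ∀ k, xR m s ^ k * (xR m s ^ (2 ^ s - 1)) ^ k = 1 := by
    intro k; rw [← mul_pow, xR_inv, one_pow]
  rw [genId, mem_dual_span]
  simp only [Set.mem_insert_iff, Set.mem_singleton_iff, forall_eq_or_imp, forall_eq]
  have E1 : DD m s c0 c1 c2 * sigmaR m s ((xR m s + 1) ^ a + uR m s ^ 2 * KtoR m s H) = 0 ↔
      DD m s c0 c1 c2 * DD m s ((xK m s + 1) ^ a) 0 H' = 0 := by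
    rw [← xR_cancel a, ← g1_eq, ← hH, map_add, map_pow, sigmaR_y, map_mul, map_pow, sigmaR_u]
    rw [show xR m s ^ a * (DD m s c0 c1 c2 * ((xR m s ^ (2 ^ s - 1) * (xR m s + 1)) ^ a +
      uR m s ^ 2 * sigmaR m s (KtoR m s H))) = DD m s c0 c1 c2 * ((xR m s + 1) ^ a +
      uR m s ^ 2 * (xR m s ^ a * sigmaR m s (KtoR m s H))) by
        rw [mul_pow]; linear_combination (DD m s c0 c1 c2 * (xR m s + 1) ^ a) * hx a]
  have E2 : ∀ (i k : ℕ), DD m s c0 c1 c2 * sigmaR m s (uR m s ^ i * (xR m s + 1) ^ k) = 0 ↔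
      DD m s c0 c1 c2 * (uR m s ^ i * (xR m s + 1) ^ k) = 0 := by
    intro i k
    rw [← xR_cancel k, map_mul, map_pow, map_pow, sigmaR_y, sigmaR_u]
    rw [show xR m s ^ k * (DD m s c0 c1 c2 * (uR m s ^ i *
      (xR m s ^ (2 ^ s - 1) * (xR m s + 1)) ^ k)) =
      DD m s c0 c1 c2 * (uR m s ^ i * (xR m s + 1) ^ k) by
        rw [mul_pow]
        linear_combination (DD m s c0 c1 c2 * uR m s ^ i * (xR m s + 1) ^ k) * hx k]
  have E3 := E2 1 (2 ^ (s - 1))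
  rw [pow_one] at E3
  rw [E1, E3, E2, g2_eq, g3_eq, DD_mul, DD_mul, DD_mul]
  constructor
  · rintro ⟨h1, h2', h3⟩
    obtain ⟨-, -, z1⟩ := DD_eq_zero h1
    obtain ⟨-, -, z2⟩ := DD_eq_zero h2'
    obtain ⟨-, -, z3⟩ := DD_eq_zero h3
    obtain ⟨e, he⟩ := y_ann (z := c0) (i := 2 ^ s - a) (by omega)
      (by linear_combination z3)
    obtain ⟨f, hf⟩ := y_ann (z := c1) (i := 2 ^ (s - 1)) (by omega)
      (by linear_combination z2)
    rw [show 2 ^ s - (2 ^ s - a) = a by omega] at he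
    rw [show 2 ^ s - 2 ^ (s - 1) = 2 ^ (s - 1) by omega] at hf
    obtain ⟨g, hg⟩ := y_ann (z := c2 - H' * e) (i := a) ha'
      (by linear_combination z1 - H' * he - (xK m s + 1) ^ a * H' * e * two_KK m s)
    exact ⟨e, f, g, he, hf, by rw [← hg]; ring⟩
  · rintro ⟨e, f, g, rfl, rfl, rfl⟩
    have p1 : (xK m s + 1) ^ a * (xK m s + 1) ^ a = 0 := by
      rw [← pow_add]; exact y_pow_ge (by omega)
    have p2 : (xK m s + 1) ^ a * (xK m s + 1) ^ (2 ^ (s - 1)) = 0 := by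
      rw [← pow_add]; exact y_pow_ge (by omega)
    have p3 : (xK m s + 1) ^ a * (xK m s + 1) ^ (2 ^ s - a) = 0 := by
      rw [← pow_add]; exact y_pow_ge (by omega)
    have p4 : (xK m s + 1) ^ (2 ^ (s - 1)) * (xK m s + 1) ^ (2 ^ (s - 1)) = 0 := by
      rw [← pow_add]; exact y_pow_ge (by omega)
    have DD0 : DD m s 0 0 0 = 0 := by simp [DD]
    refine ⟨?_, ?_, ?_⟩ <;> rw [← DD0] <;> congr 1
    · linear_combination e * p1
    · linear_combination f * p2
    · linear_combination g * p3 + (xK m s + 1) ^ a * H' * e * two_KK m s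
    · ring
    · linear_combination e * p2
    · linear_combination f * p4
    · ring
    · ring
    · linear_combination e * p3

lemma Pm_le {m s a a' : ℕ} (ha : a < 2 ^ s) (ha' : a' ≤ 2 ^ s) {H H' : KK m s}
    (h : Pm m s a' H' ((xK m s + 1) ^ a) 0 H) : a' ≤ a := by
  obtain ⟨e, -, -, h, -⟩ := h
  by_contra hlt
  push Not at hlt
  have : (xK m s + 1) ^ (2 ^ s - a' + a) = 0 := by
    rw [pow_add, h, ← mul_assoc, ← pow_add, y_pow_ge (by omega), zero_mul]
  have := y_pow_eq_zero this
  omega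

lemma Pm_dvd {m s a : ℕ} (ha : a ≤ 2 ^ s) {H H' : KK m s}
    (h : Pm m s a H' ((xK m s + 1) ^ a) 0 H) : ∃ w, H - H' = (xK m s + 1) ^ (2 ^ s - a) * w := by
  obtain ⟨e, f, g, h, -, h'⟩ := h
  obtain ⟨w, hw⟩ := y_ann (z := e - 1) ha (by linear_combination -h)
  exact ⟨H' * w + g, by rw [h']; linear_combination H' * hw⟩

lemma Pm_self (m s a : ℕ) (H : KK m s) : Pm m s a H ((xK m s + 1) ^ a) 0 H :=
  ⟨1, 0, 0, by simp, by simp, by simp⟩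

lemma Pm_congr {m s a : ℕ} {H H' : KK m s} {w : KK m s}
    (h : H - H' = (xK m s + 1) ^ (2 ^ s - a) * w) (c0 c1 c2 : KK m s) :
    Pm m s a H c0 c1 c2 ↔ Pm m s a H' c0 c1 c2 := by
  constructor
  · rintro ⟨e, f, g, h1, h2, h3⟩
    exact ⟨e, f, g + w * e, h1, h2, by rw [h3]; linear_combination e * h⟩
  · rintro ⟨e, f, g, h1, h2, h3⟩
    exact ⟨e, f, g - w * e, h1, h2, by rw [h3]; linear_combination -e * h⟩

/-- the polynomial `h` in the variable `y` -/
def hPoly {m : ℕ} (N : ℕ) (h : ℕ → Fq m) : (Fq m)[X] :=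
  ∑ j ∈ Finset.range N, C (h j) * X ^ j

def tPoly {m : ℕ} (N a : ℕ) (h : ℕ → Fq m) : (Fq m)[X] :=
  ∑ j ∈ Finset.range N, C (h j) * (X ^ j * (1 + X) ^ (a - j))

lemma coeff_hPoly {m : ℕ} {N : ℕ} (h : ℕ → Fq m) {ℓ : ℕ} (hℓ : ℓ < N) :
    (hPoly N h).coeff ℓ = h ℓ := by
  simp only [hPoly, finsetSum_coeff, coeff_C_mul, coeff_X_pow]
  simp [hℓ]

lemma coeff_tPoly {m : ℕ} {N a : ℕ} (h : ℕ → Fq m) {ℓ : ℕ} (hℓ : ℓ < N) :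
    (tPoly N a h).coeff ℓ =
      ∑ j ∈ Finset.range (ℓ + 1), h j * ((a - j).choose (ℓ - j) : Fq m) := by
  simp only [tPoly, finsetSum_coeff, coeff_C_mul, coeff_term]
  rw [← Finset.sum_subset (s₁ := Finset.range (ℓ + 1)) (s₂ := Finset.range N)]
  · refine Finset.sum_congr rfl fun i hi => ?_
    rw [if_pos (by simp at hi; omega : i ≤ ℓ)]
  · intro x; simp; omega
  · intro x _ hx
    rw [if_neg (by simp at hx; omega : ¬ x ≤ ℓ)]; simp

lemma dual_rel {m s a N : ℕ} (hN : N ≤ a) (h : ℕ → Fq m) :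
    xR m s ^ a * sigmaR m s (KtoR m s (piK m s (hPoly N h))) =
      KtoR m s (piK m s (tPoly N a h)) := by
  simp only [hPoly, tPoly, map_sum, Finset.mul_sum]
  refine Finset.sum_congr rfl fun j hj => ?_
  have hj := Finset.mem_range.1 hj
  have e : ∀ t, KtoR m s (piK m s (C t)) =
      algebraMap (R3 m) (RR m s) (algebraMap (Fq m) (R3 m) t) := by
    intro t; rw [piK, aeval_C, KtoR_alg]
  simp only [map_mul, map_pow, e, sigmaR_alg, piK_X, map_add, map_one, KtoR_x]
  have e2 := sigmaR_y m s
  rw [map_add, map_one] at e2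
  rw [e2]
  have e3 : (1 + (xR m s + 1)) = xR m s := by linear_combination two_RR m s
  rw [e3]
  have e4 : xR m s ^ j * (xR m s ^ (2 ^ s - 1)) ^ j = 1 := by rw [← mul_pow, xR_inv, one_pow]
  have e5 : xR m s ^ a = xR m s ^ (a - j) * xR m s ^ j := by rw [← pow_add]; congr 1; omega
  rw [e5, mul_pow]
  linear_combination (algebraMap (R3 m) (RR m s) (algebraMap (Fq m) (R3 m) (h j)) *
    (xR m s + 1) ^ j * xR m s ^ (a - j)) * e4

lemma selfDual_iff {m s a : ℕ} (hs : 0 < s) (ha : 2 ^ (s - 1) ≤ a) (ha' : a ≤ 2 ^ s - 1)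
    (h : ℕ → Fq m) (hh : ∀ j, 2 ^ s - a ≤ j → h j = 0) :
    IsSelfDual m s (genId m s a (piK m s (hPoly (2 ^ s - a) h))) ↔ solPred (2 ^ s - a) a h := by
  have h2 := two_half hs
  have hd := mem_dual_genId (m := m) hs ha (by omega) _ _
    (dual_rel (s := s) (N := 2 ^ s - a) (a := a) (by omega) h)
  have hm := mem_genId (m := m) hs ha (piK m s (hPoly (2 ^ s - a) h))
  have key : (∃ w, piK m s (hPoly (2 ^ s - a) h) - piK m s (tPoly (2 ^ s - a) a h) =
      (xK m s + 1) ^ (2 ^ s - a) * w) ↔ solPred (2 ^ s - a) a h := by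
    rw [← map_sub, y_dvd (by omega), X_pow_dvd_iff]
    constructor
    · intro H
      refine ⟨hh, fun ℓ hℓ => ?_⟩
      have := H ℓ hℓ
      rwa [coeff_sub, coeff_hPoly h hℓ, coeff_tPoly h hℓ, sub_eq_zero] at this
    · intro H ℓ hℓ
      rw [coeff_sub, coeff_hPoly h hℓ, coeff_tPoly h hℓ, sub_eq_zero]
      exact H.2 ℓ hℓ
  rw [← key]
  constructor
  · intro H
    apply Pm_dvd (by omega)
    rw [← hd, ← H, SetLike.mem_coe, hm]
    exact Pm_self _ _ _ _
  · rintro ⟨w, hw⟩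
    ext c
    obtain ⟨c0, c1, c2, rfl⟩ := DD_surj m s c
    rw [hd, SetLike.mem_coe, hm]
    exact Pm_congr hw _ _ _

lemma genId_inj {m s a a' : ℕ} (hs : 0 < s) (ha : 2 ^ (s - 1) ≤ a) (hab : a ≤ 2 ^ s - 1)
    (ha' : 2 ^ (s - 1) ≤ a') (hab' : a' ≤ 2 ^ s - 1) {h h' : ℕ → Fq m}
    (hh : ∀ j, 2 ^ s - a ≤ j → h j = 0) (hh' : ∀ j, 2 ^ s - a' ≤ j → h' j = 0)
    (heq : genId m s a (piK m s (hPoly (2 ^ s - a) h)) =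
      genId m s a' (piK m s (hPoly (2 ^ s - a') h'))) : a = a' ∧ h = h' := by
  have hp : 0 < 2 ^ s := by positivity
  have m1 := Pm_self m s a (piK m s (hPoly (2 ^ s - a) h))
  rw [← mem_genId hs ha, heq, mem_genId hs ha'] at m1
  have m2 := Pm_self m s a' (piK m s (hPoly (2 ^ s - a') h'))
  rw [← mem_genId hs ha', ← heq, mem_genId hs ha] at m2
  have e : a = a' := le_antisymm (Pm_le (by omega) (by omega) m2) (Pm_le (by omega) (by omega) m1)
  subst e
  refine ⟨rfl, ?_⟩
  have := Pm_dvd (by omega) m1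
  rw [← map_sub, y_dvd (by omega), X_pow_dvd_iff] at this
  funext j
  by_cases hj : 2 ^ s - a ≤ j
  · rw [hh j hj, hh' j hj]
  · have := this j (by omega)
    rwa [coeff_sub, coeff_hPoly h (by omega), coeff_hPoly h' (by omega), sub_eq_zero] at this

lemma piK_hPoly {m s : ℕ} (N : ℕ) (h : ℕ → Fq m) : piK m s (hPoly N h) =
    ∑ j ∈ Finset.range N, algebraMap (Fq m) (KK m s) (h j) * (xK m s + 1) ^ j := by
  simp [hPoly, piK]

/-- Counting the self-dual codes of Theorem 4 (`h₁ = 0` case):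
for each `2^{s-1} ≤ a ≤ 2^s − 1` there are `(2^m)^{⌈(2^s−a+1)/2⌉}` admissible `h`, and
the total number of such self-dual ideals is `Σ_a (2^m)^{⌈(2^s−a+1)/2⌉}`. -/
theorem stmt9 (m s : ℕ) (hm : 0 < m) (hs : 0 < s) :
    (∀ a : ℕ, 2 ^ (s - 1) ≤ a → a ≤ 2 ^ s - 1 →
      Nat.card {h : ℕ → Fq m //
          (∀ j, 2 ^ s - a ≤ j → h j = 0) ∧
          ∀ ℓ < 2 ^ s - a,
            h ℓ = ∑ j ∈ Finset.range (ℓ + 1), h j * ((a - j).choose (ℓ - j) : Fq m)} =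
        (2 ^ m) ^ (⌈((2 ^ s : ℚ) - (a : ℚ) + 1) / 2⌉₊)) ∧
    Set.ncard {C : Ideal (RR m s) | IsSelfDual m s C ∧
        ∃ a : ℕ, 2 ^ (s - 1) ≤ a ∧ a ≤ 2 ^ s - 1 ∧
        ∃ h : ℕ → Fq m, (∀ j, 2 ^ s - a ≤ j → h j = 0) ∧
          C = Ideal.span
            {(xR m s + 1) ^ a + uR m s ^ 2 * KtoR m s (∑ j ∈ Finset.range (2 ^ s - a),
                algebraMap (Fq m) (KK m s) (h j) * (xK m s + 1) ^ j),
             uR m s * (xR m s + 1) ^ (2 ^ (s - 1)),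
             uR m s ^ 2 * (xR m s + 1) ^ (2 ^ s - a)}} =
      ∑ a ∈ Finset.Icc (2 ^ (s - 1) : ℕ) (2 ^ s - 1),
        (2 ^ m) ^ (⌈((2 ^ s : ℚ) - (a : ℚ) + 1) / 2⌉₊) := by
  have hcardF : Nat.card (Fq m) = 2 ^ m := GaloisField.card 2 m hm.ne'
  have hhalf := two_half hs
  have hone : ∀ a : ℕ, 2 ^ (s - 1) ≤ a → a ≤ 2 ^ s - 1 →
      Finite {h : ℕ → Fq m // solPred (2 ^ s - a) a h} ∧
      Nat.card {h : ℕ → Fq m // solPred (2 ^ s - a) a h} =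
        (2 ^ m) ^ (⌈((2 ^ s : ℚ) - (a : ℚ) + 1) / 2⌉₊) := by
    intro a h1 h2
    have hp : 0 < 2 ^ s := by positivity
    have := card_sol (F := Fq m) (N := 2 ^ s - a) (a := a) (by omega) (by omega) (by omega)
    rw [ceil_half (by omega), ← hcardF]
    exact this
  refine ⟨fun a h1 h2 => (hone a h1 h2).2, ?_⟩
  let Φ : (Σ a : {a : ℕ // a ∈ Finset.Icc (2 ^ (s - 1)) (2 ^ s - 1)}, {h : ℕ → Fq m // solPred (2 ^ s - a.1) a.1 h}) → Ideal (RR m s) :=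
    fun p => genId m s p.1.1 (piK m s (hPoly (2 ^ s - p.1.1) p.2.1))
  have hΦ : Function.Injective Φ := by
    rintro ⟨⟨a, ha⟩, ⟨h, hh⟩⟩ ⟨⟨a', ha'⟩, ⟨h', hh'⟩⟩ e
    have ha1 := Finset.mem_Icc.1 ha
    have ha2 := Finset.mem_Icc.1 ha'
    obtain ⟨rfl, rfl⟩ := genId_inj hs ha1.1 ha1.2 ha2.1 ha2.2 hh.1 hh'.1 e
    rfl
  have hset : {C : Ideal (RR m s) | IsSelfDual m s C ∧
        ∃ a : ℕ, 2 ^ (s - 1) ≤ a ∧ a ≤ 2 ^ s - 1 ∧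
        ∃ h : ℕ → Fq m, (∀ j, 2 ^ s - a ≤ j → h j = 0) ∧
          C = Ideal.span
            {(xR m s + 1) ^ a + uR m s ^ 2 * KtoR m s (∑ j ∈ Finset.range (2 ^ s - a),
                algebraMap (Fq m) (KK m s) (h j) * (xK m s + 1) ^ j),
             uR m s * (xR m s + 1) ^ (2 ^ (s - 1)),
             uR m s ^ 2 * (xR m s + 1) ^ (2 ^ s - a)}} = Set.range Φ := by
    ext I
    simp only [Set.mem_ofPred_eq, Set.mem_range]
    constructor
    · rintro ⟨hI, a, h1, h2, h, hh, rfl⟩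
      rw [← piK_hPoly] at hI
      have := (selfDual_iff hs h1 h2 h hh).1 hI
      refine ⟨⟨⟨a, Finset.mem_Icc.2 ⟨h1, h2⟩⟩, ⟨h, this⟩⟩, ?_⟩
      rw [← piK_hPoly]; rfl
    · rintro ⟨⟨⟨a, ha⟩, ⟨h, hh⟩⟩, rfl⟩
      have ha1 := Finset.mem_Icc.1 ha
      refine ⟨(selfDual_iff hs ha1.1 ha1.2 h hh.1).2 hh, a, ha1.1, ha1.2, h, hh.1, ?_⟩
      rw [← piK_hPoly]; rfl
  rw [hset, ← Set.image_univ, Set.ncard_image_of_injective _ hΦ, Set.ncard_univ]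
  have : ∀ a : {a : ℕ // a ∈ Finset.Icc (2 ^ (s - 1)) (2 ^ s - 1)}, Finite {h : ℕ → Fq m // solPred (2 ^ s - a.1) a.1 h} := fun a =>
    (hone a.1 (Finset.mem_Icc.1 a.2).1 (Finset.mem_Icc.1 a.2).2).1
  rw [Nat.card_sigma]
  refine Eq.trans ?_ (Finset.sum_coe_sort (Finset.Icc (2 ^ (s - 1)) (2 ^ s - 1))
    (fun a : ℕ => (2 ^ m) ^ (⌈((2 ^ s : ℚ) - (a : ℚ) + 1) / 2⌉₊)))
  refine Finset.sum_congr rfl ?_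
  intro a _
  exact (hone a.1 (Finset.mem_Icc.1 a.2).1 (Finset.mem_Icc.1 a.2).2).2
end
end

section
/- Let a ≥ b ≥ 1 be integers with a ≡ b (mod 2), and let T be the b×b matrix over F = GF(2^m) whose (i, j) entry (rows and columns indexed by 0 ≤ i, j ≤ b−1) is the binomial coefficient C(a−j, i−j) reduced into F when i > j, and 0 when i ≤ j. Then the kernel of T (as a linear map F^b → F^b) has dimension ⌈(b+1)/2⌉. -/
noncomputable section

open Polynomial

lemma aux_sq {R : Type*} [CommRing R] [CharP R 2] (a b i j : ℕ) (hi : i < b) (hb : b ≤ a) :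
    ∑ k ∈ Finset.range b, (if k < i then ((a - k).choose (i - k) : R) else 0) *
      (if j < k then ((a - j).choose (k - j) : R) else 0) = 0 := by
  rcases Nat.lt_or_ge j i with h | h
  · have h1 : ∑ k ∈ Finset.range b, (if k < i then ((a - k).choose (i - k) : R) else 0) *
      (if j < k then ((a - j).choose (k - j) : R) else 0) =
      ∑ k ∈ Finset.Ico (j+1) i, (((a-j).choose (i-j) : R) * ((i-j).choose (k-j) : R)) := by
      symm
      have hs : Finset.Ico (j+1) i ⊆ Finset.range b := by
        intro k hk
        simp only [Finset.mem_Ico, Finset.mem_range] at *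
        omega
      rw [← Finset.sum_subset hs]
      · apply Finset.sum_congr rfl
        intro k hk
        simp only [Finset.mem_Ico] at hk
        rw [if_pos hk.2, if_pos (by omega)]
        have := Nat.choose_mul (n := a - j) (k := i - j) (s := k - j) (by omega)
        rw [show a - j - (k - j) = a - k by omega, show i - j - (k - j) = i - k by omega] at this
        rw [mul_comm ((a-k).choose (i-k) : R)]
        exact_mod_cast congrArg (Nat.cast (R := R)) this
      · intro k _ hk
        simp only [Finset.mem_Ico, not_and, not_lt] at hk
        by_cases hkj : j < k
        · rw [if_neg (by have := hk hkj; omega), zero_mul]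
        · rw [if_neg hkj, mul_zero]
    rw [h1, ← Finset.mul_sum, Finset.sum_Ico_eq_sum_range]
    obtain ⟨n, rfl⟩ : ∃ n, i = j + (n + 1) := ⟨i - j - 1, by omega⟩
    have h2 := Nat.sum_range_choose (n+1)
    rw [Finset.sum_range_succ, Finset.sum_range_succ'] at h2
    have h3 := congrArg (Nat.cast (R := R)) h2
    have h20 : (2 : R) = 0 := CharTwo.two_eq_zero
    push_cast at h3
    simp only [h20, Nat.choose_self, Nat.choose_zero_right, Nat.cast_one] at h3
    rw [add_assoc, CharTwo.add_self_eq_zero, add_zero, zero_pow (by omega)] at h3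
    convert mul_zero _ using 2
    rw [← h3]
    apply Finset.sum_congr (by congr 1; omega)
    intro t _
    congr 2 <;> omega
  · apply Finset.sum_eq_zero
    intro k _
    by_cases hk : k < i
    · rw [if_neg (show ¬ j < k by omega), mul_zero]
    · rw [if_neg hk, zero_mul]

lemma aux_fix {R : Type*} [CommRing R] [CharP R 2] (c b i : ℕ) (hi : i < b) :
    ∑ j ∈ Finset.range b, (if j < i then ((2*c - j).choose (i - j) : R) else 0) *
      (c.choose j : R) = 0 := by
  have h : (∑ j ∈ Finset.range (c+1), (X:R[X]) ^ j * (1+X)^(2*c-j) * (c.choose j : R[X]))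
      = (1+X)^c := by
    have h0 : (X + (1 + X) : R[X]) = 1 := by
      rw [add_left_comm, CharTwo.add_self_eq_zero, add_zero]
    have := add_pow (X : R[X]) (1+X) c
    rw [h0, one_pow] at this
    have h1 := congrArg (fun p => (1+X : R[X])^c * p) this
    simp only [mul_one] at h1
    rw [h1, Finset.mul_sum]
    apply Finset.sum_congr rfl
    intro j hj
    simp only [Finset.mem_range] at hj
    rw [show 2*c-j = c + (c-j) by omega, pow_add]
    ring
  have h2 := congrArg (fun p => coeff p i) h
  simp only [finsetSum_coeff, coeff_mul_natCast, coeff_X_pow_mul', coeff_one_add_X_pow] at h2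
  have e : ∀ (N : ℕ), c + 1 ≤ N → ∑ j ∈ Finset.range (c+1),
      (if j ≤ i then ((2*c-j).choose (i-j) : R) else 0) * (c.choose j : R) =
      ∑ j ∈ Finset.range N, (if j ≤ i then ((2*c-j).choose (i-j) : R) else 0) * (c.choose j : R) := by
    intro N hN
    apply Finset.sum_subset (Finset.range_mono hN)
    intro j _ hj
    simp only [Finset.mem_range] at hj
    rw [Nat.choose_eq_zero_of_lt (by omega : c < j)]
    simp
  rw [e (c+1+b) (by omega)] at h2
  have e2 : ∑ j ∈ Finset.range (c+1+b),
      (if j ≤ i then ((2*c-j).choose (i-j) : R) else 0) * (c.choose j : R) =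
      ∑ j ∈ Finset.range b, (if j ≤ i then ((2*c-j).choose (i-j) : R) else 0) * (c.choose j : R) := by
    symm
    apply Finset.sum_subset (Finset.range_mono (by omega))
    intro j _ hj
    simp only [Finset.mem_range] at hj
    rw [if_neg (by omega), zero_mul]
  rw [e2] at h2
  have e3 : ∀ j, (if j ≤ i then ((2*c-j).choose (i-j) : R) else 0) * (c.choose j : R) =
     (if j < i then ((2*c-j).choose (i-j) : R) else 0) * (c.choose j : R) +
      (if j = i then (c.choose j : R) else 0) := by
    intro j
    rcases lt_trichotomy j i with h | h | h
    · simp [h, h.le, h.ne]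
    · simp [h]
    · simp [h.not_ge, h.not_gt, h.ne']
  simp only [e3, Finset.sum_add_distrib, Finset.sum_ite_eq', Finset.mem_range, hi, if_true] at h2
  simpa using h2

lemma aux_rank (m a b : ℕ) (hpar : a % 2 = b % 2) (hab : b ≤ a) (hb : 1 ≤ b)
    (T : Matrix (Fin b) (Fin b) (Fq m))
    (hT : ∀ i j : Fin b, T i j =
      if (j : ℕ) < (i : ℕ) then (((a - (j : ℕ)).choose ((i : ℕ) - (j : ℕ)) : ℕ) : Fq m)
      else 0) : (b - 1) / 2 ≤ T.rank := by
  let r : Fin ((b-1)/2) → Fin b := fun t => ⟨2 * t.1 + (1 - b % 2) + 1, by have := t.2; omega⟩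
  let c : Fin ((b-1)/2) → Fin b := fun t => ⟨2 * t.1 + (1 - b % 2), by have := t.2; omega⟩
  refine le_trans ?_ (Matrix.rank_submatrix_le T r c)
  have hdet : (T.submatrix r c).det = 1 := by
    rw [Matrix.det_of_isLowerTriangular]
    · apply Finset.prod_eq_one
      intro t _
      rw [Matrix.submatrix_apply, hT]
      simp only [r, c]
      rw [if_pos (by omega), Nat.add_sub_cancel_left, Nat.choose_one_right]
      have := t.2
      have hodd : (a - (2 * t.1 + (1 - b % 2))) % 2 = 1 := by omega
      rw [← Nat.div_add_mod (a - (2 * t.1 + (1 - b % 2))) 2, hodd]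
      push_cast
      have h20 : (2 : Fq m) = 0 := CharTwo.two_eq_zero
      simp [h20]
    · intro i j hij
      have hij' : (i : ℕ) < (j : ℕ) := hij
      rw [Matrix.submatrix_apply, hT]
      simp only [r, c]
      rw [if_neg (by omega)]
  rw [Matrix.rank_of_isUnit _ ((Matrix.isUnit_iff_isUnit_det _).2 (by rw [hdet]; exact isUnit_one))]
  simp

/-- For `a ≥ b ≥ 1` with `a ≡ b (mod 2)`, the strictly lower-triangular
binomial matrix `T` (char-2 specialization of `T(a+b,b)`) has kernel of dimension
`⌈(b+1)/2⌉` over `F = GF(2^m)`. -/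
theorem stmt13 (m : ℕ) (hm : 0 < m) (a b : ℕ) (hb : 1 ≤ b) (hab : b ≤ a)
    (hpar : a % 2 = b % 2)
    (T : Matrix (Fin b) (Fin b) (Fq m))
    (hT : ∀ i j : Fin b, T i j =
      if (j : ℕ) < (i : ℕ) then (((a - (j : ℕ)).choose ((i : ℕ) - (j : ℕ)) : ℕ) : Fq m)
      else 0) :
    Module.finrank (Fq m) (LinearMap.ker T.mulVecLin) = ⌈((b : ℚ) + 1) / 2⌉₊ := by
  have hlow := aux_rank m a b hpar hab hb T hT
  have hrn := LinearMap.finrank_range_add_finrank_ker T.mulVecLin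
  rw [Module.finrank_fin_fun] at hrn
  change T.rank + _ = b at hrn
  have hle : LinearMap.range T.mulVecLin ≤ LinearMap.ker T.mulVecLin := by
    rw [LinearMap.range_le_ker_iff, ← Matrix.mulVecLin_mul]
    have : T * T = 0 := by
      ext i j
      rw [Matrix.mul_apply]
      simp only [hT]
      rw [Matrix.zero_apply]
      refine Eq.trans ?_ (aux_sq (R := Fq m) a b i j i.2 hab)
      exact Fin.sum_univ_eq_sum_range (fun k => (if k < (i : ℕ) then
        ((a - k).choose ((i : ℕ) - k) : Fq m) else 0) *
        (if (j : ℕ) < k then ((a - (j : ℕ)).choose (k - (j : ℕ)) : Fq m) else 0)) b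
    rw [this, Matrix.mulVecLin_zero]
  have hup : 2 * T.rank + 1 ≤ b := by
    have h1 : T.rank ≤ Module.finrank (Fq m) (LinearMap.ker T.mulVecLin) :=
      Submodule.finrank_mono hle
    rcases Nat.mod_two_eq_zero_or_one b with h0 | h0
    · obtain ⟨c, hc⟩ : ∃ c, a = 2 * c := ⟨a / 2, by omega⟩
      have hlt : LinearMap.range T.mulVecLin < LinearMap.ker T.mulVecLin := by
        refine lt_of_le_of_ne hle fun heq => ?_
        have hv : (fun j : Fin b => (c.choose (j : ℕ) : Fq m)) ∈ LinearMap.ker T.mulVecLin := by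
          rw [LinearMap.mem_ker, Matrix.mulVecLin_apply]
          ext i
          simp only [Matrix.mulVec, dotProduct, hT, hc]
          rw [Pi.zero_apply]
          refine Eq.trans ?_ (aux_fix (R := Fq m) c b i i.2)
          exact Fin.sum_univ_eq_sum_range (fun k => (if k < (i : ℕ) then
            ((2 * c - k).choose ((i : ℕ) - k) : Fq m) else 0) * (c.choose k : Fq m)) b
        rw [← heq] at hv
        obtain ⟨w, hw⟩ := hv
        have h2 := congrFun hw ⟨0, hb⟩
        simp [Matrix.mulVec, dotProduct, hT] at h2
      have h2 : T.rank < Module.finrank (Fq m) (LinearMap.ker T.mulVecLin) :=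
        Submodule.finrank_lt_finrank_of_lt hlt
      omega
    · omega
  have hk : Module.finrank (Fq m) (LinearMap.ker T.mulVecLin) = b / 2 + 1 := by omega
  rw [hk]
  symm
  rw [Nat.ceil_eq_iff (by omega)]
  have h1 : (2 * (b / 2) : ℕ) ≤ b := by omega
  have h2 : b ≤ 2 * (b / 2) + 1 := by omega
  have h1' : (2 : ℚ) * ((b / 2 : ℕ) : ℚ) ≤ b := by exact_mod_cast h1
  have h2' : (b : ℚ) ≤ 2 * ((b / 2 : ℕ) : ℚ) + 1 := by exact_mod_cast h2
  constructor
  · simp only [Nat.add_sub_cancel]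
    linarith
  · rw [Nat.cast_add, Nat.cast_one]
    linarith
end
end

section
/- Let a ≥ b ≥ 2 be integers with a ≡ b (mod 2). Let T be the b×b matrix over F = GF(2^m) with (i, j) entry C(a−j, i−j) reduced into F for i > j and 0 for i ≤ j (indices 0 ≤ i, j ≤ b−1), and let T′ be the (b−1)×(b−1) matrix with (i, j) entry C(a−1−j, i−j) reduced into F for i > j and 0 for i ≤ j (indices 0 ≤ i, j ≤ b−2). Fix y₁, …, y_{b−1} ∈ F and set y = (0, y₁, …, y_{b−1})ᵗ and y′ = (y₁, …, y_{b−1})ᵗ. Then the number of vectors x = (x₀, …, x_{b−1}) ∈ F^b with x₀ ≠ 0 and T x = y equals (2^m)^{⌈(b+1)/2⌉}·δ − (2^m)^{⌈b/2⌉}·δ′, where δ = 1 if the system T x = y has at least one solution and δ = 0 otherwise, and δ′ = 1 if the system T′ x′ = y′ has at least one solution and δ′ = 0 otherwise. -/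
noncomputable section

open Polynomial

open scoped Classical


lemma aux_binom {F : Type*} [Field F] [CharP F 2] (n r : ℕ) :
    ∑ t ∈ Finset.range r, ((n.choose t : ℕ) : F) * (((2 * n - t).choose (r - t) : ℕ) : F) = 0 := by
  have h2 : (2 : F[X]) = 0 := by
    have h := CharP.cast_eq_zero F[X] 2
    simpa using h
  have key : ∑ t ∈ Finset.range (n + 1),
      (X : F[X]) ^ t * (1 + X) ^ (2 * n - t) * ((n.choose t : ℕ) : F[X]) = (1 + X) ^ n := by
    have h1 : ((X : F[X]) + (1 + X)) ^ n = 1 := by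
      have : (X : F[X]) + (1 + X) = 1 := by linear_combination X * h2
      rw [this, one_pow]
    rw [add_pow] at h1
    calc _ = (1 + X) ^ n * ∑ t ∈ Finset.range (n + 1),
        (X : F[X]) ^ t * (1 + X) ^ (n - t) * ((n.choose t : ℕ) : F[X]) := by
          rw [Finset.mul_sum]
          refine Finset.sum_congr rfl fun t ht => ?_
          have ht' : t ≤ n := by simpa [Nat.lt_succ_iff] using ht
          have : 2 * n - t = n + (n - t) := by omega
          rw [this, pow_add]; ring
      _ = _ := by rw [h1, mul_one]
  have hc := congrArg (fun p : F[X] => p.coeff r) key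
  simp only [finsetSum_coeff, coeff_one_add_X_pow, coeff_mul_natCast, coeff_X_pow_mul'] at hc
  have e1 : ∑ t ∈ Finset.range (r + 1),
      ((n.choose t : ℕ) : F) * (((2 * n - t).choose (r - t) : ℕ) : F) = ((n.choose r : ℕ) : F) := by
    rw [← hc]
    set N := max (n + 1) (r + 1)
    have a1 : ∑ t ∈ Finset.range (r + 1),
      ((n.choose t : ℕ) : F) * (((2 * n - t).choose (r - t) : ℕ) : F) =
      ∑ t ∈ Finset.range N, (if t ≤ r then (((2 * n - t).choose (r - t) : ℕ) : F) else 0) *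
        ((n.choose t : ℕ) : F) := by
      rw [← Finset.sum_subset (Finset.range_mono (le_max_right (n + 1) (r + 1)))]
      · refine Finset.sum_congr rfl fun t ht => ?_
        have ht' : t ≤ r := by simpa [Nat.lt_succ_iff] using ht
        rw [if_pos ht', mul_comm]
      · intro t _ ht
        have ht' : ¬ t ≤ r := by simpa [Nat.lt_succ_iff] using ht
        rw [if_neg ht', zero_mul]
    rw [a1]
    symm
    apply Finset.sum_subset (Finset.range_mono (le_max_left (n + 1) (r + 1)))
    intro t _ ht
    have ht' : n < t := by simpa [Nat.lt_succ_iff] using ht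
    rw [Nat.choose_eq_zero_of_lt ht', Nat.cast_zero, mul_zero]
  rw [Finset.sum_range_succ] at e1
  simpa using e1

/-- Index equivalence for the free coordinates. -/
def idxEquiv (b : ℕ) (hb : 1 ≤ b) :
    {j : Fin b // ¬ ((j : ℕ) % 2 ≠ b % 2 ∧ (j : ℕ) + 1 ≠ b)} ≃ Fin (b / 2 + 1) where
  toFun j := ⟨((j.1 : ℕ) + 1 - b % 2) / 2, by have := j.1.2; omega⟩
  invFun k := ⟨⟨min (2 * (k : ℕ) + b % 2) (b - 1), by omega⟩, by
    have := k.2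
    simp only
    omega⟩
  left_inv j := by
    have h1 := j.1.2
    have h2 := j.2
    apply Subtype.ext
    apply Fin.ext
    simp only
    omega
  right_inv k := by
    have := k.2
    apply Fin.ext
    simp only
    omega

lemma card_supp {F : Type*} [Field F] [Finite F] (b : ℕ) (hb : 1 ≤ b) :
    Nat.card {c : Fin b → F // ∀ j : Fin b, ((j : ℕ) % 2 ≠ b % 2 ∧ (j : ℕ) + 1 ≠ b) → c j = 0} =
      Nat.card F ^ (b / 2 + 1) := by
  classical
  let p : Fin b → Prop := fun j => (j : ℕ) % 2 ≠ b % 2 ∧ (j : ℕ) + 1 ≠ b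
  have e1 : {c : Fin b → F // ∀ j : Fin b, p j → c j = 0} ≃ ({j : Fin b // ¬ p j} → F) :=
    (Equiv.subtypeEquivRight (fun c => by
      constructor
      · intro h; funext j; exact h j.1 j.2
      · intro h j hj; exact congrFun h ⟨j, hj⟩)).trans
    (Equiv.subtypePreimage p (fun _ => (0 : F)))
  rw [Nat.card_congr e1, Nat.card_congr (Equiv.arrowCongr (idxEquiv b hb) (Equiv.refl F)), Nat.card_fun, Nat.card_fin]

lemma card_ker {F : Type*} [Field F] [Finite F] [CharP F 2] (a b : ℕ) (hb : 1 ≤ b) (hab : b ≤ a)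
    (hpar : a % 2 = b % 2) (T : Matrix (Fin b) (Fin b) F)
    (hT : ∀ i j : Fin b, T i j =
      if (j : ℕ) < (i : ℕ) then (((a - (j : ℕ)).choose ((i : ℕ) - (j : ℕ)) : ℕ) : F)
      else 0) :
    Nat.card {x : Fin b → F // T.mulVec x = 0} = Nat.card F ^ (b / 2 + 1) := by
  classical
  let V : Matrix (Fin b) (Fin b) F := fun i j =>
    if (j : ℕ) % 2 = b % 2 then
      (if (j : ℕ) ≤ i then ((((a - (j : ℕ)) / 2).choose ((i : ℕ) - j) : ℕ) : F) else 0)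
    else if i = j then 1 else 0
  have hdet : V.det = 1 := by
    rw [Matrix.det_of_lowerTriangular]
    · apply Finset.prod_eq_one
      intro i _
      simp [V]
    · intro i j hij
      have hij' : i < j := by simpa using hij
      have h2 : ¬ ((j : ℕ) ≤ i) := by simpa using hij'
      simp [V, hij'.ne, hij']
  have hunit : IsUnit V := by
    rw [Matrix.isUnit_iff_isUnit_det, hdet]; exact isUnit_one
  have hTV : T * V = fun (i j : Fin b) => if (j : ℕ) % 2 = b % 2 then 0 else T i j := by
    ext i j
    rw [Matrix.mul_apply]
    by_cases hj : (j : ℕ) % 2 = b % 2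
    · rw [if_pos hj]
      obtain ⟨n, hn⟩ : ∃ n, a = j + 2 * n := ⟨(a - j) / 2, by have := j.2; omega⟩
      have hn' : (a - (j : ℕ)) / 2 = n := by omega
      let G : ℕ → F := fun k : ℕ =>
          if k < i ∧ (j : ℕ) ≤ k then
            ((n.choose (k - j) : ℕ) : F) * (((a - k).choose (i - k) : ℕ) : F) else 0
      have h0 : ∀ k : Fin b, T i k * V k j = G (k : ℕ) := by
        intro k
        simp only [hT, V, G, if_pos hj, hn']
        by_cases h1 : (k : ℕ) < i <;> by_cases h2 : (j : ℕ) ≤ k <;> simp [h1, h2, mul_comm]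
      rw [Finset.sum_congr rfl (fun k _ => h0 k), Fin.sum_univ_eq_sum_range G b]
      simp only [G]
      rw [← Finset.sum_filter]
      have hf : (Finset.range b).filter (fun k => k < (i : ℕ) ∧ (j : ℕ) ≤ k) =
          Finset.Ico (j : ℕ) i := by
        ext k
        have := i.2
        simp only [Finset.mem_filter, Finset.mem_range, Finset.mem_Ico]
        omega
      rw [hf, Finset.sum_Ico_eq_sum_range]
      rw [← aux_binom (F := F) n ((i : ℕ) - j)]
      refine Finset.sum_congr rfl fun t _ => ?_
      have g1 : (j : ℕ) + t - j = t := by omega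
      have g2 : a - ((j : ℕ) + t) = 2 * n - t := by omega
      have g3 : (i : ℕ) - ((j : ℕ) + t) = i - j - t := by omega
      rw [g1, g2, g3]
    · simp [V, hj]
  have hker : ∀ c : Fin b → F, (∀ j : Fin b, ((j : ℕ) % 2 ≠ b % 2 ∧ (j : ℕ) + 1 ≠ b) → c j = 0) ↔
      T.mulVec (V.mulVec c) = 0 := by
    intro c
    rw [Matrix.mulVec_mulVec, hTV]
    constructor
    · intro h
      funext i
      simp only [Matrix.mulVec, dotProduct, Pi.zero_apply]
      apply Finset.sum_eq_zero
      intro j _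
      by_cases h1 : (j : ℕ) % 2 = b % 2
      · simp [h1]
      by_cases h2 : (j : ℕ) + 1 = b
      · have : ¬ ((j : ℕ) < i) := by have := i.2; omega
        simp only [hT, if_neg this, if_neg h1, zero_mul]
      · rw [h j ⟨h1, h2⟩, mul_zero]
    · intro h
      have main : ∀ n : ℕ, ∀ j : Fin b, (j : ℕ) = n →
          ((j : ℕ) % 2 ≠ b % 2 ∧ (j : ℕ) + 1 ≠ b) → c j = 0 := by
        intro n
        induction n using Nat.strong_induction_on with
        | _ n ih =>
          intro j hjn hj
          have hlt : (j : ℕ) + 1 < b := by have := j.2; omega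
          have hr := congrFun h ⟨(j : ℕ) + 1, hlt⟩
          simp only [Matrix.mulVec, dotProduct, Pi.zero_apply] at hr
          rw [Finset.sum_eq_single j] at hr
          · rw [if_neg hj.1, hT] at hr
            have hodd : (((a - (j : ℕ)) : ℕ) : F) = 1 := by
              obtain ⟨k, hk⟩ : ∃ k, a - (j : ℕ) = 2 * k + 1 :=
                ⟨(a - j) / 2, by have := j.2; omega⟩
              have h2 : ((2 : ℕ) : F) = 0 := CharP.cast_eq_zero F 2
              rw [hk, Nat.cast_add, Nat.cast_mul, h2]; simp
            simpa [hodd] using hr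
          · intro k _ hk
            by_cases h1 : (k : ℕ) % 2 = b % 2
            · simp [h1]
            by_cases h3 : (k : ℕ) < j
            · rw [ih k (by omega) k rfl ⟨h1, by omega⟩, mul_zero]
            · have hne : (k : ℕ) ≠ j := fun hh => hk (Fin.ext hh)
              have : ¬ ((k : ℕ) < (j : ℕ) + 1) := by omega
              simp only [hT, if_neg this, if_neg h1, zero_mul]
          · intro hh; exact absurd (Finset.mem_univ j) hh
      exact fun j hj => main j j rfl hj
  have hbij : Function.Bijective V.mulVec :=
    ⟨Matrix.mulVec_injective_of_isUnit hunit, Matrix.mulVec_surjective_iff_isUnit.2 hunit⟩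
  rw [← card_supp (F := F) b hb]
  exact (Nat.card_congr ((Equiv.ofBijective _ hbij).subtypeEquiv (fun c => hker c))).symm

lemma card_sol_s14 {F : Type*} [Field F] [Finite F] (b : ℕ) (T : Matrix (Fin b) (Fin b) F)
    (y : Fin b → F) [Decidable (∃ x, T.mulVec x = y)] :
    Nat.card {x : Fin b → F // T.mulVec x = y} =
      Nat.card {x : Fin b → F // T.mulVec x = 0} * (if ∃ x, T.mulVec x = y then 1 else 0) := by
  by_cases h : ∃ x, T.mulVec x = y
  · rw [if_pos h, mul_one]
    obtain ⟨z, hz⟩ := h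
    refine Nat.card_congr ((Equiv.subRight z).subtypeEquiv (fun x => ?_))
    simp [Matrix.mulVec_sub, hz, sub_eq_zero]
  · rw [if_neg h, mul_zero]
    have : IsEmpty {x : Fin b → F // T.mulVec x = y} := ⟨fun x => h ⟨x.1, x.2⟩⟩
    simp

/-- Counting solutions of `T x = y` with `x₀ ≠ 0`, where `y₀ = 0`. -/
theorem stmt14 (m : ℕ) (hm : 0 < m) (a b : ℕ) (hb : 2 ≤ b) (hab : b ≤ a)
    (hpar : a % 2 = b % 2)
    (T : Matrix (Fin b) (Fin b) (Fq m))
    (hT : ∀ i j : Fin b, T i j =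
      if (j : ℕ) < (i : ℕ) then (((a - (j : ℕ)).choose ((i : ℕ) - (j : ℕ)) : ℕ) : Fq m)
      else 0)
    (T' : Matrix (Fin (b - 1)) (Fin (b - 1)) (Fq m))
    (hT' : ∀ i j : Fin (b - 1), T' i j =
      if (j : ℕ) < (i : ℕ) then (((a - 1 - (j : ℕ)).choose ((i : ℕ) - (j : ℕ)) : ℕ) : Fq m)
      else 0)
    (y : Fin b → Fq m) (hy0 : y ⟨0, by omega⟩ = 0)
    (y' : Fin (b - 1) → Fq m)
    (hy' : ∀ i : Fin (b - 1), y' i = y ⟨(i : ℕ) + 1, by have := i.isLt; omega⟩) :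
    (Nat.card {x : Fin b → Fq m // x ⟨0, by omega⟩ ≠ 0 ∧ T.mulVec x = y} : ℤ) =
      (2 ^ m : ℤ) ^ (⌈((b : ℚ) + 1) / 2⌉₊) * (if ∃ x, T.mulVec x = y then 1 else 0) -
      (2 ^ m : ℤ) ^ (⌈(b : ℚ) / 2⌉₊) * (if ∃ x', T'.mulVec x' = y' then 1 else 0) := by
  
  have hcard : Nat.card (Fq m) = 2 ^ m := GaloisField.card 2 m hm.ne'
  have c1 : ⌈((b : ℚ) + 1) / 2⌉₊ = b / 2 + 1 := by
    rw [Nat.ceil_eq_iff (by omega)]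
    have h : b = 2 * (b / 2) + b % 2 := by omega
    have h3 : b % 2 = 0 ∨ b % 2 = 1 := by omega
    have h' : (b : ℚ) = 2 * ((b / 2 : ℕ) : ℚ) + ((b % 2 : ℕ) : ℚ) := by exact_mod_cast h
    rcases h3 with h3 | h3 <;> rw [h3] at h' <;> constructor <;> push_cast at h' ⊢ <;>
      (try simp only [Nat.add_sub_cancel]) <;> linarith
  have c2 : ⌈(b : ℚ) / 2⌉₊ = (b - 1) / 2 + 1 := by
    rw [Nat.ceil_eq_iff (by omega)]
    obtain ⟨d, rfl⟩ : ∃ d, b = d + 1 := ⟨b - 1, by omega⟩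
    have h : d = 2 * (d / 2) + d % 2 := by omega
    have h3 : d % 2 = 0 ∨ d % 2 = 1 := by omega
    have h' : (d : ℚ) = 2 * ((d / 2 : ℕ) : ℚ) + ((d % 2 : ℕ) : ℚ) := by exact_mod_cast h
    rcases h3 with h3 | h3 <;> rw [h3] at h' <;> constructor <;>
      simp only [Nat.add_sub_cancel] <;> push_cast at h' ⊢ <;> linarith
  have s1 := card_sol_s14 b T y
  rw [card_ker a b (by omega) hab hpar T hT, hcard] at s1
  have s2 := card_sol_s14 (b - 1) T' y'
  rw [card_ker (a - 1) (b - 1) (by omega) (by omega) (by omega) T' hT', hcard] at s2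
  have hsplit : Nat.card {x : Fin b → Fq m // T.mulVec x = y} =
      Nat.card {x : Fin b → Fq m // x ⟨0, by omega⟩ ≠ 0 ∧ T.mulVec x = y} +
      Nat.card {x' : Fin (b - 1) → Fq m // T'.mulVec x' = y'} := by
    obtain ⟨d, rfl⟩ : ∃ d, b = d + 1 := ⟨b - 1, by omega⟩
    have e : {x' : Fin d → Fq m // T'.mulVec x' = y'} ≃
        {x : Fin (d + 1) → Fq m // x 0 = 0 ∧ T.mulVec x = y} := by
      have hiff : ∀ x' : Fin d → Fq m,
          T.mulVec (Fin.cons 0 x' : Fin (d + 1) → Fq m) = y ↔ T'.mulVec x' = y' := by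
        intro x'
        have hz : T.mulVec (Fin.cons 0 x' : Fin (d + 1) → Fq m) 0 = y 0 := by
          have : y 0 = 0 := hy0
          rw [this]
          simp only [Matrix.mulVec, dotProduct]
          apply Finset.sum_eq_zero
          intro j _
          simp [hT]
        have hs : ∀ i : Fin d, T.mulVec (Fin.cons 0 x' : Fin (d + 1) → Fq m) i.succ =
            T'.mulVec x' i := by
          intro i
          simp only [Matrix.mulVec, dotProduct]
          rw [Fin.sum_univ_succ]
          simp only [Fin.cons_zero, Fin.cons_succ, mul_zero, zero_add]
          refine Finset.sum_congr rfl fun j _ => ?_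
          have hh := hT' i j
          rw [hh, hT]
          have g1 : a - ((j : ℕ) + 1) = a - 1 - j := by omega
          have g2 : (i : ℕ) + 1 - ((j : ℕ) + 1) = i - j := by omega
          simp only [Fin.val_succ, g1, g2, Nat.add_lt_add_iff_right]
        constructor
        · intro h
          funext i
          rw [← hs i, h, hy' i]; rfl
        · intro h
          funext i
          refine Fin.cases hz (fun i => ?_) i
          rw [hs i, h, hy' i]; rfl
      exact
        { toFun := fun x' => ⟨Fin.cons 0 x'.1, by simp, (hiff x'.1).2 x'.2⟩
          invFun := fun x => ⟨Fin.tail x.1, by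
            rw [← hiff]
            have h : (Fin.cons 0 (Fin.tail x.1) : Fin (d + 1) → Fq m) = x.1 := by
              have h0 := Fin.cons_self_tail x.1
              rwa [x.2.1] at h0
            rw [h]; exact x.2.2⟩
          left_inv := fun x' => by
            apply Subtype.ext
            exact Fin.tail_cons (α := fun _ => Fq m) 0 x'.1
          right_inv := fun x => by
            apply Subtype.ext
            have h : (Fin.cons 0 (Fin.tail x.1) : Fin (d + 1) → Fq m) = x.1 := by
              have h0 := Fin.cons_self_tail x.1
              rwa [x.2.1] at h0
            exact h }
    have e' := Nat.card_congr e
    refine Eq.trans ?_ (congrArg _ e'.symm)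
    rw [← Nat.card_sum]
    have hd : Disjoint (fun x : Fin (d + 1) → Fq m => x 0 ≠ 0 ∧ T.mulVec x = y)
        (fun x : Fin (d + 1) → Fq m => x 0 = 0 ∧ T.mulVec x = y) := by
      rw [Pi.disjoint_iff]
      intro x
      rw [Prop.disjoint_iff]
      tauto
    refine Eq.trans (Nat.card_congr (Equiv.subtypeEquivRight fun x => ?_))
      (Nat.card_congr (subtypeOrEquiv _ _ hd))
    tauto
  rw [s1, s2] at hsplit
  have hZ := congrArg (fun n : ℕ => (n : ℤ)) hsplit
  rw [c1, c2]
  simp only [Nat.cast_add, Nat.cast_mul, Nat.cast_pow, Nat.cast_ite, Nat.cast_one, Nat.cast_zero,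
    Nat.cast_ofNat] at hZ
  linarith
end
end
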